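/- Let α ∈ [0,1] be irrational and let 0 < δ ≤ ∞. Then the exact resonance level set D(δ) satisfies the zero–infinity dichotomy: ℋ^{ω_s}(D(δ)) = 0 for every s > 1, and ℋ^{ω_s}(D(δ)) = ∞ for every 0 < s ≤ 1. -/

import Mathlib

open Filter MeasureTheory Set
open scoped ENNReal NNReal Classical

/-- Distance from `x : ℝ` to the nearest integer, i.e. `‖x‖_{ℝ/ℤ}`. -/
noncomputable def distZ (x : ℝ) : ℝ := |x - round x|

/-- The `ω`-Hausdorff measure of a set `S ⊆ ℝ`: the limit as `ε → 0⁺` (equivalently the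
supremum over `ε > 0`, by monotonicity) of the infimum of `∑ᵢ ω (bᵢ - aᵢ)` over countable
covers of `S` by intervals `(aᵢ, bᵢ)` of length at most `ε`. -/
noncomputable def gaugeHaus (ω : ℝ → ℝ) (S : Set ℝ) : ℝ≥0∞ :=
  ⨆ (ε : ℝ) (_ : 0 < ε),
    ⨅ (a : ℕ → ℝ) (b : ℕ → ℝ) (_ : S ⊆ ⋃ i, Set.Ioo (a i) (b i))
      (_ : ∀ i, a i ≤ b i ∧ b i - a i ≤ ε),
      ∑' i, ENNReal.ofReal (ω (b i - a i))

/-- The gauge function `ω_s(r) = (-log r)^{-s}` for `0 < r < 1`, and `ω_s(0) = 0`. -/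
noncomputable def omegaS (s : ℝ) (r : ℝ) : ℝ := if 0 < r then (-Real.log r) ^ (-s) else 0

/-- The resonance strength `δ(α, x) = limsup_{|k| → ∞} (-log ‖x - kα‖_{ℝ/ℤ}) / |k|`,
with the convention that it is `∞` when `x ≡ kα (mod ℤ)` for some `k ∈ ℤ`. -/

noncomputable def resStrength (α x : ℝ) : ℝ≥0∞ :=
  if ∃ k m : ℤ, x = (k : ℝ) * α + (m : ℝ) then ⊤
  else Filter.limsup
    (fun k : ℤ => ENNReal.ofReal (-Real.log (distZ (x - (k : ℝ) * α)) / |(k : ℝ)|))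
    Filter.cofinite

/-- The exact resonance level set `D(δ) = {x ∈ [0,1] : δ(α,x) = δ}`. -/
noncomputable def resSet (α : ℝ) (δ : ℝ≥0∞) : Set ℝ :=
  {x ∈ Set.Icc (0 : ℝ) 1 | resStrength α x = δ}

/-! ### The distance to the nearest integer -/

lemma distZ_nonneg (x : ℝ) : 0 ≤ distZ x := abs_nonneg _

lemma distZ_le_abs_sub_intCast (x : ℝ) (m : ℤ) : distZ x ≤ |x - m| := round_le x m

lemma distZ_le_add_abs_sub (x y : ℝ) : distZ x ≤ distZ y + |x - y| := by
  refine (distZ_le_abs_sub_intCast x (round y)).trans ?_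
  have := abs_add_le (y - round y) (x - y)
  unfold distZ
  calc |x - round y| = |(y - round y) + (x - y)| := by ring_nf
    _ ≤ _ := this

lemma distZ_neg (x : ℝ) : distZ (-x) = distZ x := by
  have key : ∀ y : ℝ, distZ (-y) ≤ distZ y := fun y => by
    have := distZ_le_abs_sub_intCast (-y) (-round y)
    rw [← abs_neg] at this
    unfold distZ at *
    convert this using 2
    push_cast
    ring
  refine le_antisymm (key x) ?_
  simpa using key (-x)

lemma distZ_add_intCast (x : ℝ) (m : ℤ) : distZ (x + m) = distZ x := by
  unfold distZ
  rw [round_add_intCast]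
  push_cast
  ring_nf

lemma distZ_eq_self {x : ℝ} (h0 : 0 ≤ x) (h1 : x < 1 / 2) : distZ x = x := by
  have : round x = 0 := by
    rw [round_eq, Int.floor_eq_zero_iff]
    constructor <;> linarith
  simp [distZ, this, abs_of_nonneg h0]

lemma distZ_fract_sub (x y : ℝ) : distZ (Int.fract x - y) = distZ (x - y) := by
  have := distZ_add_intCast (Int.fract x - y) ⌊x⌋
  rw [← this]
  congr 1
  have := Int.fract_add_floor x
  linarith

lemma distZ_sub_fract (x y : ℝ) : distZ (y - Int.fract x) = distZ (y - x) := by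
  rw [← distZ_neg, neg_sub, distZ_fract_sub, ← distZ_neg, neg_sub]

lemma distZ_le_abs_fract_sub_fract (x y : ℝ) :
    distZ (x - y) ≤ |Int.fract x - Int.fract y| := by
  rw [← distZ_fract_sub, ← distZ_sub_fract]
  simpa using distZ_le_abs_sub_intCast (Int.fract x - Int.fract y) 0

lemma distZ_intCast_mul_pos {α : ℝ} (hα : Irrational α) {k : ℤ} (hk : k ≠ 0) :
    0 < distZ (k * α) := by
  refine lt_of_le_of_ne (distZ_nonneg _) fun h => ?_
  have h1 : (k : ℝ) * α = round ((k : ℝ) * α) := by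
    have := abs_eq_zero.1 h.symm
    linarith
  exact (hα.intCast_mul hk).ne_int _ h1

/-! ### Diophantine approximation -/

lemma exists_pos_le_distZ {α : ℝ} (hα : Irrational α) (N : ℕ) :
    ∃ c : ℝ, 0 < c ∧ ∀ k : ℕ, 0 < k → k ≤ N → c ≤ distZ (k * α) := by
  induction N with
  | zero => exact ⟨1, one_pos, fun k h1 h2 => by omega⟩
  | succ N ih =>
    obtain ⟨c, hc, h⟩ := ih
    have hp : 0 < distZ ((N + 1 : ℕ) * α) := by
      have := distZ_intCast_mul_pos hα (k := (N + 1 : ℕ)) (by omega)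
      simpa using this
    refine ⟨min c (distZ ((N + 1 : ℕ) * α)), lt_min hc hp, fun k h1 h2 => ?_⟩
    rcases Nat.lt_or_ge N k with h3 | h3
    · obtain rfl : k = N + 1 := by omega
      exact min_le_right _ _
    · exact (min_le_left _ _).trans (h k h1 h3)

/-- An irrational number has good rational approximations with arbitrarily large denominators. -/
lemma exists_large_good_denominator {α : ℝ} (hα : Irrational α) (N : ℕ) :
    ∃ (q : ℕ) (p : ℤ), N ≤ q ∧ 0 < q ∧ IsCoprime p (q : ℤ) ∧ |α - p / q| < 1 / (q : ℝ) ^ 2 := by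
  obtain ⟨c, hc, h⟩ := exists_pos_le_distZ hα N
  obtain ⟨n, hn⟩ := exists_nat_one_div_lt hc
  obtain ⟨r, hr1, hr2⟩ := Real.exists_rat_abs_sub_le_and_den_le α (n := n + 1) (by omega)
  have hq : (0 : ℝ) < r.den := by exact_mod_cast r.den_pos
  have hrr : (r : ℝ) = r.num / r.den := by exact_mod_cast (Rat.num_div_den r).symm
  refine ⟨r.den, r.num, ?_, r.den_pos, ?_, ?_⟩
  · by_contra! hlt
    have h1 := h r.den r.den_pos hlt.le
    have h2 := distZ_le_abs_sub_intCast (r.den * α) r.num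
    have h3 : |(r.den : ℝ) * α - r.num| = r.den * |α - r| := by
      rw [hrr, ← abs_of_pos hq, ← abs_mul, abs_of_pos hq]
      congr 1
      field_simp
    have h4 : (r.den : ℝ) * |α - r| ≤ 1 / (n + 1) := by
      calc (r.den : ℝ) * |α - r| ≤ r.den * (1 / (((n + 1 : ℕ) + 1) * r.den)) := by gcongr
        _ = 1 / ((n + 1 : ℕ) + 1) := by field_simp
        _ ≤ 1 / (n + 1) := by push_cast; gcongr; linarith
    linarith
  · exact Int.isCoprime_iff_nat_coprime.2 (by simpa using r.reduced)
  · rw [← hrr]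
    refine hr1.trans_lt ?_
    rw [sq]
    have : (r.den : ℝ) ≤ (n + 1 : ℕ) := by exact_mod_cast hr2
    gcongr
    linarith

/-- The multiples of `α` with index of size at most `8 * n` are `1 / (64 * n)`-separated from `0`
modulo one. -/
def IsSepScale (α : ℝ) (n : ℕ) : Prop :=
  ∀ k : ℤ, k ≠ 0 → k.natAbs ≤ 8 * n → 1 / (64 * (n : ℝ)) ≤ distZ (k * α)

lemma exists_large_isSepScale {α : ℝ} (hα : Irrational α) (N : ℕ) :
    ∃ n, N ≤ n ∧ 0 < n ∧ IsSepScale α n := by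
  obtain ⟨q, p, hq, hq0, hcop, hpq⟩ := exists_large_good_denominator hα (16 * (N + 1))
  refine ⟨q / 16, by omega, by omega, fun k hk0 hk => ?_⟩
  have hn : ((q : ℝ)) ≤ 32 * (q / 16 : ℕ) := by
    have : q ≤ 32 * (q / 16) := by omega
    exact_mod_cast this
  have hqr : (0 : ℝ) < q := by exact_mod_cast hq0
  have hk2 : |(k : ℝ)| ≤ q / 2 := by
    have h1 : 2 * k.natAbs ≤ q := by omega
    have h2 : (2 * k.natAbs : ℝ) ≤ q := by exact_mod_cast h1
    rw [Nat.cast_natAbs, Int.cast_abs] at h2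
    linarith
  have h3 : (1 : ℝ) / q ≤ |(k : ℝ) * p / q - round (k * α)| := by
    have h4 : k * p - round (k * α) * q ≠ 0 := by
      intro h
      have h5 : (q : ℤ) ∣ k * p := ⟨round (k * α), by linarith⟩
      have h6 : (q : ℤ) ∣ k := hcop.symm.dvd_of_dvd_mul_right h5
      have := Nat.le_of_dvd (Int.natAbs_pos.2 hk0) (Int.natCast_dvd.1 h6)
      omega
    have h7 : (1 : ℝ) ≤ |(k : ℝ) * p - round (k * α) * q| := by
      exact_mod_cast Int.one_le_abs h4
    have h8 : (k : ℝ) * p / q - round (k * α) = ((k : ℝ) * p - round (k * α) * q) / q := by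
      field_simp
    rw [h8, abs_div, abs_of_pos hqr]
    gcongr
  have h9 : |(k : ℝ) * (α - p / q)| ≤ 1 / (2 * q) := by
    rw [abs_mul]
    calc |(k : ℝ)| * |α - p / q| ≤ q / 2 * (1 / (q : ℝ) ^ 2) := by gcongr
      _ = 1 / (2 * q) := by field_simp
  have h10 : |(k : ℝ) * p / q - round (k * α)| ≤
      distZ (k * α) + |(k : ℝ) * (α - p / q)| := by
    unfold distZ
    rw [← abs_neg ((k : ℝ) * (α - p / q))]
    refine le_trans (le_of_eq ?_) (abs_add_le _ _)
    congr 1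
    ring
  have h11 : (1 : ℝ) / q - 1 / (2 * q) = 1 / (2 * q) := by field_simp; norm_num
  have h12 : 1 / (64 * ((q / 16 : ℕ) : ℝ)) ≤ 1 / (2 * q) := by
    refine one_div_le_one_div_of_le (by positivity) ?_
    linarith
  linarith

lemma card_le_of_separated {F : Finset ℕ} {g : ℕ → ℝ} {s A W : ℝ} (hs : 0 < s) (hW : 0 ≤ W)
    (hsep : ∀ x ∈ F, ∀ y ∈ F, x ≠ y → s ≤ |g x - g y|)
    (hg : ∀ x ∈ F, g x ∈ Set.Icc A (A + W)) : (F.card : ℝ) ≤ W / s + 1 := by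
  have hcard : F.card ≤ (Finset.range (⌊W / s⌋₊ + 1)).card := by
    refine Finset.card_le_card_of_injOn (fun x => ⌊(g x - A) / s⌋₊) ?_ ?_
    · intro x hx
      have := hg x hx
      simp only [Finset.coe_range, Set.mem_Iio, Nat.lt_succ_iff]
      refine Nat.floor_le_floor ?_
      gcongr
      linarith [this.2]
    · intro x hx y hy hxy
      by_contra hne
      have h1 := hsep x hx y hy hne
      simp only at hxy
      have hx0 : 0 ≤ (g x - A) / s := div_nonneg (by linarith [(hg x hx).1]) hs.le
      have hy0 : 0 ≤ (g y - A) / s := div_nonneg (by linarith [(hg y hy).1]) hs.le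
      have a1 := Nat.floor_le hx0
      have a2 := Nat.lt_floor_add_one ((g x - A) / s)
      have b1 := Nat.floor_le hy0
      have b2 := Nat.lt_floor_add_one ((g y - A) / s)
      rw [hxy] at a1 a2
      have h2 : |(g x - A) / s - (g y - A) / s| < 1 := by
        rw [abs_lt]; constructor <;> linarith
      have h3 : (g x - A) / s - (g y - A) / s = (g x - g y) / s := by ring
      rw [h3, abs_div, abs_of_pos hs, div_lt_one hs] at h2
      linarith
  rw [Finset.card_range] at hcard
  have h1 : (F.card : ℝ) ≤ (⌊W / s⌋₊ + 1 : ℕ) := by exact_mod_cast hcard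
  push_cast at h1
  linarith [Nat.floor_le (div_nonneg hW hs.le)]

/-- A block of `q` consecutive multiples of `α` visits an interval of length `v - u` about
`q * (v - u)` times, if `q` is a good denominator. -/
lemma le_card_filter_fract_block {α : ℝ} {q : ℕ} {p : ℤ} (hq : 0 < q) (hcop : IsCoprime p (q : ℤ))
    (hpq : |α - p / q| < 1 / (q : ℝ) ^ 2) {u v : ℝ} (hu : 0 ≤ u) (hv : v ≤ 1) (A : ℕ) :
    q * (v - u) - 3 ≤
      (((Finset.Ico A (A + q)).filter fun l : ℕ => Int.fract ((l : ℝ) * α) ∈ Set.Icc u v).card :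
        ℝ) := by
  have hqr : (0 : ℝ) < q := by exact_mod_cast hq
  obtain ⟨p', t, hp'⟩ := hcop
  set lo : ℤ := ⌈q * (u - A * α) + 1⌉ with hlo
  set hi : ℤ := ⌊q * (v - A * α) - 1⌋ with hhi
  have hlo' := Int.le_ceil (q * (u - A * α) + 1)
  have hlo'' := Int.ceil_lt_add_one (q * (u - A * α) + 1)
  have hhi' := Int.floor_le (q * (v - A * α) - 1)
  have hhi'' := Int.lt_floor_add_one (q * (v - A * α) - 1)
  rw [← hlo] at hlo' hlo''
  rw [← hhi] at hhi' hhi''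
  have hcard : (Finset.Icc lo hi).card ≤
      ((Finset.Ico A (A + q)).filter fun l : ℕ => Int.fract ((l : ℝ) * α) ∈ Set.Icc u v).card := by
    refine Finset.card_le_card_of_injOn (fun j => A + ((j * p') % q).toNat) ?_ ?_
    · intro j hj
      have hj' := Finset.mem_Icc.1 hj
      have h1 : (lo : ℝ) ≤ j := by exact_mod_cast hj'.1
      have h2 : (j : ℝ) ≤ hi := by exact_mod_cast hj'.2
      have hnn := Int.emod_nonneg (j * p') (b := q) (by omega)
      have hlt := Int.emod_lt_of_pos (j * p') (b := q) (by omega)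
      set i : ℕ := ((j * p') % q).toNat with hi'
      have hiz : (i : ℤ) = (j * p') % q := by omega
      have hiq : (i : ℝ) < q := by
        have : i < q := by omega
        exact_mod_cast this
      have hi0 : (0 : ℝ) ≤ i := by positivity
      simp only [Finset.coe_filter, Finset.mem_Ico, Set.mem_ofPred_eq, ← hi']
      refine ⟨⟨by omega, by omega⟩, ?_⟩
      have hd : ∃ m : ℤ, (i : ℤ) * p = j + m * q := by
        refine ⟨-(j * t) - (j * p' / q) * p, ?_⟩
        have h3 := Int.mul_ediv_add_emod (j * p') q
        have h4 : (i : ℤ) = j * p' - q * (j * p' / q) := by omega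
        rw [h4]
        have h5 : j * p' * p = j * (1 - t * q) := by rw [← hp']; ring
        linear_combination h5
      obtain ⟨m, hm⟩ := hd
      have hmr : (i : ℝ) * p = j + m * q := by exact_mod_cast hm
      have he : |(i : ℝ) * (α - p / q)| < 1 / q := by
        rw [abs_mul, abs_of_nonneg hi0]
        calc (i : ℝ) * |α - p / q| ≤ q * |α - p / q| := by gcongr
          _ < q * (1 / (q : ℝ) ^ 2) := by gcongr
          _ = 1 / q := by field_simp
      have heq : ((A + i : ℕ) : ℝ) * α = (A * α + j / q + i * (α - p / q)) + m := by
        push_cast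
        have : (i : ℝ) * (p / q) = j / q + m := by
          rw [← mul_div_assoc, hmr]; field_simp
        linear_combination this
      rw [abs_lt] at he
      have hjq : (j : ℝ) / q * q = j := by field_simp
      have hq1 : (1 : ℝ) / q * q = 1 := by field_simp
      have hy1 : u < A * α + j / q + i * (α - p / q) := by
        have : u + 1 / q ≤ A * α + j / q := by
          refine le_of_mul_le_mul_right ?_ hqr
          rw [add_mul, add_mul, hjq, hq1]
          linarith
        linarith
      have hy2 : A * α + j / q + i * (α - p / q) < v := by
        have : A * α + j / q ≤ v - 1 / q := by
          refine le_of_mul_le_mul_right ?_ hqr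
          rw [add_mul, sub_mul, hjq, hq1]
          linarith
        linarith
      have hfr : Int.fract (((A + i : ℕ) : ℝ) * α) = A * α + j / q + i * (α - p / q) := by
        rw [heq, Int.fract_add_intCast, Int.fract_eq_self]
        constructor <;> linarith
      rw [hfr]
      exact ⟨hy1.le, hy2.le⟩
    · intro j hj j' hj' hjj
      have h1 := Finset.mem_Icc.1 hj
      have h2 := Finset.mem_Icc.1 hj'
      have hnn := Int.emod_nonneg (j * p') (b := q) (by omega)
      have hnn' := Int.emod_nonneg (j' * p') (b := q) (by omega)
      have hjj' : A + ((j * p') % q).toNat = A + ((j' * p') % q).toNat := hjj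
      have h3 : (j * p') % q = (j' * p') % q := by omega
      have h4 : (q : ℤ) ∣ (j - j') * p' := by
        rw [sub_mul]; exact Int.dvd_of_emod_eq_zero (Int.emod_eq_emod_iff_emod_sub_eq_zero.1 h3)
      have hc' : IsCoprime (q : ℤ) p' := ⟨t, p, by linarith⟩
      have h5 : (q : ℤ) ∣ j - j' := hc'.dvd_of_dvd_mul_right h4
      have h6 : ((hi - lo : ℤ) : ℝ) < q := by
        push_cast
        nlinarith
      have h7 : hi - lo < q := by exact_mod_cast h6
      by_contra hne
      have h8 := Int.le_of_dvd (abs_pos.2 (sub_ne_zero.2 hne)) ((dvd_abs _ _).2 h5)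
      rcases abs_cases (j - j') with h | h <;> omega
  refine le_trans ?_ (Nat.cast_le.2 hcard)
  rw [Int.card_Icc]
  have h2 : ((hi + 1 - lo : ℤ) : ℝ) ≤ ((hi + 1 - lo).toNat : ℝ) := by
    exact_mod_cast Int.self_le_toNat _
  push_cast at h2
  refine le_trans ?_ h2
  nlinarith

lemma le_card_filter_fract_blocks {α : ℝ} {q : ℕ} {p : ℤ} (hq : 0 < q)
    (hcop : IsCoprime p (q : ℤ)) (hpq : |α - p / q| < 1 / (q : ℝ) ^ 2) {u v : ℝ} (hu : 0 ≤ u)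
    (hv : v ≤ 1) (A T : ℕ) :
    T * (q * (v - u) - 3) ≤
      (((Finset.Ico A (A + T * q)).filter fun l : ℕ => Int.fract ((l : ℝ) * α) ∈ Set.Icc u v).card :
        ℝ) := by
  induction T with
  | zero => simp
  | succ T ih =>
    have h1 := le_card_filter_fract_block hq hcop hpq hu hv (A + T * q)
    have h2 : Finset.Ico A (A + (T + 1) * q) =
        Finset.Ico A (A + T * q) ∪ Finset.Ico (A + T * q) (A + T * q + q) := by
      rw [Finset.Ico_union_Ico_eq_Ico (by omega) (by omega)]
      ring_nf
    rw [h2, Finset.filter_union, Finset.card_union_of_disjoint]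
    · push_cast
      linarith
    · exact Finset.disjoint_filter_filter (Finset.Ico_disjoint_Ico_consecutive _ _ _)

lemma le_card_filter_fract_window {α : ℝ} {q : ℕ} {p : ℤ} (hq : 0 < q)
    (hcop : IsCoprime p (q : ℤ)) (hpq : |α - p / q| < 1 / (q : ℝ) ^ 2) {u v : ℝ} (hu : 0 ≤ u)
    (hv : v ≤ 1) (hw : 6 ≤ q * (v - u)) {n : ℕ} (hn : q ≤ n) :
    n * (v - u) / 4 ≤
      (((Finset.Ico n (2 * n)).filter fun l : ℕ => Int.fract ((l : ℝ) * α) ∈ Set.Icc u v).card :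
        ℝ) := by
  have h1 := le_card_filter_fract_blocks hq hcop hpq hu hv n (n / q)
  have h2 : n / q * q ≤ n := Nat.div_mul_le_self n q
  have h3 : n ≤ 2 * (n / q * q) := by
    have a1 := Nat.div_add_mod n q
    have a2 := Nat.mod_lt n hq
    have a3 : 1 ≤ n / q := (Nat.one_le_div_iff hq).2 hn
    nlinarith
  have h4 : ((n / q : ℕ) : ℝ) * q * 2 ≥ n := by
    have : n ≤ (n / q) * q * 2 := by omega
    exact_mod_cast this
  have hqr : (0 : ℝ) < q := by exact_mod_cast hq
  have hvu : 0 < v - u := by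
    by_contra! h
    nlinarith
  have h5 : (n : ℝ) * (v - u) / 4 ≤ (n / q : ℕ) * (q * (v - u) - 3) := by
    have : (0 : ℝ) ≤ (n / q : ℕ) := by positivity
    nlinarith
  refine h5.trans (h1.trans ?_)
  have h6 : Finset.Ico n (n + n / q * q) ⊆ Finset.Ico n (2 * n) :=
    Finset.Ico_subset_Ico_right (by omega)
  exact_mod_cast Finset.card_le_card (Finset.filter_subset_filter _ h6)

/-- The indices in `[n, 2 * n)` whose multiple of `α` falls in the left half of `[u, u + L]` and is
not too close to another multiple of `α` with index of size in `(K, 4 * n]`. -/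
noncomputable def goodIndices (α d u L : ℝ) (K n : ℕ) : Finset ℕ :=
  (Finset.Ico n (2 * n)).filter fun l : ℕ =>
    Int.fract ((l : ℝ) * α) ∈ Set.Icc u (u + L / 2) ∧
      ∀ k : ℤ, K < k.natAbs → k.natAbs ≤ 4 * n → k ≠ l →
        2 * Real.exp (-(d * k.natAbs)) ≤ distZ (l * α - k * α)

lemma IsSepScale.le_distZ_sub {α : ℝ} {n : ℕ} (h : IsSepScale α n) {j k : ℤ} (hjk : j ≠ k)
    (hle : (j - k).natAbs ≤ 8 * n) : 1 / (64 * (n : ℝ)) ≤ distZ (j * α - k * α) := by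
  have := h (j - k) (sub_ne_zero.2 hjk) hle
  rwa [Int.cast_sub, sub_mul] at this

lemma IsSepScale.card_close_le {α : ℝ} {n : ℕ} (h : IsSepScale α n) (hn : 0 < n) {k : ℤ}
    (hk : k.natAbs ≤ 4 * n) {ρ : ℝ} (hρ : 0 < ρ) :
    (((Finset.Ico n (2 * n)).filter fun l : ℕ =>
      k ≠ l ∧ distZ (l * α - k * α) < 2 * ρ).card : ℝ) ≤ 384 * ρ * n := by
  set F := (Finset.Ico n (2 * n)).filter fun l : ℕ => k ≠ l ∧ distZ (l * α - k * α) < 2 * ρ with hF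
  have hnr : (0 : ℝ) < n := by exact_mod_cast hn
  rcases F.eq_empty_or_nonempty with he | ⟨l0, hl0⟩
  · rw [he]; simp; positivity
  have h1 : 1 / (64 * (n : ℝ)) < 2 * ρ := by
    rw [hF, Finset.mem_filter, Finset.mem_Ico] at hl0
    have := h.le_distZ_sub (j := l0) (k := k) hl0.2.1.symm (by omega)
    push_cast at this
    linarith [hl0.2.2]
  have h2 : 1 < 128 * ρ * n := by
    rw [div_lt_iff₀ (by positivity)] at h1
    linarith
  have h3 := card_le_of_separated (F := F) (s := 1 / (64 * (n : ℝ))) (A := -(2 * ρ)) (W := 4 * ρ)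
    (g := fun l : ℕ => ((l : ℝ) * α - k * α) - round ((l : ℝ) * α - k * α)) (by positivity)
    (by positivity) ?_ ?_
  · have h4 : 4 * ρ / (1 / (64 * (n : ℝ))) = 256 * ρ * n := by field_simp; norm_num
    rw [h4] at h3
    linarith
  · intro x hx y hy hxy
    rw [hF, Finset.mem_filter, Finset.mem_Ico] at hx hy
    have h5 := h.le_distZ_sub (j := x) (k := y) (by exact_mod_cast hxy) (by omega)
    refine h5.trans ?_
    have h6 := distZ_le_abs_sub_intCast ((x : ℝ) * α - y * α)
      (round ((x : ℝ) * α - k * α) - round ((y : ℝ) * α - k * α))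
    refine h6.trans (le_of_eq ?_)
    push_cast
    congr 1
    ring
  · intro x hx
    rw [hF, Finset.mem_filter] at hx
    have h5 : |((x : ℝ) * α - k * α) - round ((x : ℝ) * α - k * α)| < 2 * ρ := hx.2.2
    rw [abs_lt] at h5
    constructor <;> linarith

lemma sum_exp_Ico_le {d : ℝ} (hd : 0 < d) (K m : ℕ) :
    ∑ j ∈ Finset.Ico (K + 1) m, Real.exp (-(d * j)) ≤
      Real.exp (-(d * K)) / (1 - Real.exp (-d)) := by
  have h1 : Real.exp (-d) < 1 := by rw [Real.exp_lt_one_iff]; linarith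
  have h2 := geom_sum_Ico_le_of_lt_one (m := K + 1) (n := m) (Real.exp_pos (-d)).le h1
  have h3 : ∀ j : ℕ, Real.exp (-(d * j)) = Real.exp (-d) ^ j := fun j => by
    rw [← Real.exp_nat_mul]; ring_nf
  simp only [h3]
  refine h2.trans ?_
  have : 0 < 1 - Real.exp (-d) := by linarith
  gcongr ?_ / _
  exact pow_le_pow_of_le_one (Real.exp_pos _).le h1.le (Nat.le_succ K)

lemma le_card_goodIndices {α : ℝ} {q : ℕ} {p : ℤ} (hq : 0 < q) (hcop : IsCoprime p (q : ℤ))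
    (hpq : |α - p / q| < 1 / (q : ℝ) ^ 2) {d u L : ℝ} (hd : 0 < d) (hu : 0 ≤ u) (hL : 0 < L)
    (hu1 : u + L ≤ 1) (hqL : 12 ≤ q * L) {K n : ℕ}
    (hK : Real.exp (-(d * K)) ≤ L * (1 - Real.exp (-d)) / 12288) (hn : q ≤ n)
    (hsep : IsSepScale α n) :
    n * L / 16 ≤ ((goodIndices α d u L K n).card : ℝ) := by
  have hn0 : 0 < n := by omega
  have hnr : (0 : ℝ) < n := by exact_mod_cast hn0
  set B : ℤ → Finset ℕ := fun k => (Finset.Ico n (2 * n)).filter fun l : ℕ =>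
    k ≠ l ∧ distZ (l * α - k * α) < 2 * Real.exp (-(d * k.natAbs)) with hB
  set bad : Finset ℕ := (Finset.Ico (K + 1) (4 * n + 1)).biUnion fun j => B j ∪ B (-j) with hbad
  have hB' : ∀ k : ℤ, k.natAbs ≤ 4 * n → ((B k).card : ℝ) ≤ 384 * Real.exp (-(d * k.natAbs)) * n :=
    fun k hk => hsep.card_close_le hn0 hk (Real.exp_pos _)
  have hbadcard : (bad.card : ℝ) ≤ n * L / 16 := by
    have h1 : bad.card ≤ ∑ j ∈ Finset.Ico (K + 1) (4 * n + 1), ((B j).card + (B (-j)).card) :=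
      Finset.card_biUnion_le.trans (Finset.sum_le_sum fun j _ => Finset.card_union_le _ _)
    have h2 : (bad.card : ℝ) ≤
        ∑ j ∈ Finset.Ico (K + 1) (4 * n + 1), 768 * n * Real.exp (-(d * j)) := by
      refine (Nat.cast_le.2 h1).trans ?_
      push_cast
      refine Finset.sum_le_sum fun j hj => ?_
      rw [Finset.mem_Ico] at hj
      have a1 := hB' j (by omega)
      have a2 := hB' (-j) (by omega)
      simp only [Int.natAbs_neg, Int.natAbs_natCast] at a1 a2
      linarith
    rw [← Finset.mul_sum] at h2
    have h3 := sum_exp_Ico_le hd K (4 * n + 1)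
    have h4 : 0 < 1 - Real.exp (-d) := by
      have : Real.exp (-d) < 1 := by rw [Real.exp_lt_one_iff]; linarith
      linarith
    have h5 : Real.exp (-(d * K)) / (1 - Real.exp (-d)) ≤ L / 12288 := by
      rw [div_le_iff₀ h4]; linarith
    calc (bad.card : ℝ) ≤ _ := h2
      _ ≤ 768 * n * (L / 12288) := by gcongr; exact h3.trans h5
      _ = n * L / 16 := by ring
  have hwin := le_card_filter_fract_window hq hcop hpq (u := u) (v := u + L / 2) hu (by linarith)
    (by linarith) hn
  have hsub : ((Finset.Ico n (2 * n)).filter fun l : ℕ =>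
      Int.fract ((l : ℝ) * α) ∈ Set.Icc u (u + L / 2)) ⊆ goodIndices α d u L K n ∪ bad := by
    intro l hl
    rw [Finset.mem_filter] at hl
    rw [Finset.mem_union]
    by_cases hg : l ∈ goodIndices α d u L K n
    · exact Or.inl hg
    · right
      simp only [goodIndices, Finset.mem_filter, not_and, not_forall, not_le] at hg
      obtain ⟨k, hk1, hk2, hk3, hk4⟩ := hg hl.1 hl.2
      rw [hbad, Finset.mem_biUnion]
      refine ⟨k.natAbs, by rw [Finset.mem_Ico]; omega, ?_⟩
      have hkB : l ∈ B k := by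
        rw [hB, Finset.mem_filter]
        exact ⟨hl.1, hk3, hk4⟩
      rw [Finset.mem_union]
      rcases Int.natAbs_eq k with h | h
      · left; rwa [← h]
      · right; rwa [← h]
  have hc := (Finset.card_le_card hsub).trans (Finset.card_union_le _ _)
  have hc' : (((Finset.Ico n (2 * n)).filter fun l : ℕ =>
      Int.fract ((l : ℝ) * α) ∈ Set.Icc u (u + L / 2)).card : ℝ) ≤
      (goodIndices α d u L K n).card + bad.card := by exact_mod_cast hc
  have : (n : ℝ) * (u + L / 2 - u) / 4 = n * L / 16 + n * L / 16 := by ring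
  linarith

/-! ### Covers of nested intervals -/

/-- The part of the `ω₁`-mass of a cover carried by the intervals that meet `[u, u + L]`. -/
noncomputable def coverMass (a b : ℕ → ℝ) (u L : ℝ) : ℝ≥0∞ :=
  ∑' j, if (Set.Ioo (a j) (b j) ∩ Set.Icc u (u + L)).Nonempty then
    ENNReal.ofReal (omegaS 1 (b j - a j)) else 0

/-- The interval of points at distance between `exp (-d * l) / 2` and `exp (-d * l)` to the right of
the `l`-th multiple of `α`. -/
noncomputable def sideInterval (α d : ℝ) (l : ℕ) : Set ℝ :=
  Set.Icc (Int.fract ((l : ℝ) * α) + Real.exp (-(d * l)) / 2)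
    (Int.fract ((l : ℝ) * α) + Real.exp (-(d * l)))

lemma ENNReal.le_tsum_min {ι : Type*} {W : ℝ≥0∞} {f : ι → ℝ≥0∞} (h : W ≤ ∑' i, f i) :
    W ≤ ∑' i, min (f i) W := by
  by_cases hW : ∃ i, W ≤ f i
  · obtain ⟨i, hi⟩ := hW
    calc W = min (f i) W := (min_eq_right hi).symm
      _ ≤ _ := ENNReal.le_tsum i
  · push Not at hW
    simpa only [min_eq_left (hW _).le] using h

lemma le_of_meets_sideInterval {α d u L u' L' : ℝ} {K n n' l l' : ℕ} (hnn' : n ≤ n')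
    (hn' : 0 < n') (hKn : K < n) (hl : l ∈ goodIndices α d u L K n)
    (hl' : l' ∈ goodIndices α d u' L' K n') (hne : l ≠ l') (hsep : IsSepScale α n')
    (hρ : Real.exp (-(d * l')) ≤ 1 / (512 * (n' : ℝ))) {a b : ℝ}
    (hm : (Set.Ioo a b ∩ sideInterval α d l).Nonempty)
    (hm' : (Set.Ioo a b ∩ sideInterval α d l').Nonempty) : 1 / (256 * (n' : ℝ)) ≤ b - a := by
  obtain ⟨x, ⟨hx1, hx2⟩, hx3, hx4⟩ := hm
  obtain ⟨y, ⟨hy1, hy2⟩, hy3, hy4⟩ := hm'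
  simp only [goodIndices, Finset.mem_filter, Finset.mem_Ico] at hl hl'
  have h1 := hl'.2.2 l (by simp; omega) (by simp; omega) (by exact_mod_cast hne)
  have h2 := hsep.le_distZ_sub (j := l') (k := l) (by exact_mod_cast hne.symm) (by omega)
  have h3 := distZ_le_abs_fract_sub_fract ((l' : ℝ) * α) (l * α)
  simp only [Int.natAbs_natCast, Int.cast_natCast] at h1 h2
  have h4 := Real.exp_pos (-(d * l))
  have h5 := Real.exp_pos (-(d * l'))
  have h6 : 1 / (64 * (n' : ℝ)) = 8 * (1 / (512 * (n' : ℝ))) := by field_simp; norm_num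
  have h7 : 1 / (256 * (n' : ℝ)) = 2 * (1 / (512 * (n' : ℝ))) := by field_simp; norm_num
  rw [h6] at h2
  rw [h7]
  rcases abs_cases (Int.fract ((l' : ℝ) * α) - Int.fract ((l : ℝ) * α)) with h | h <;> linarith

lemma card_meets_sideInterval_le {α d u L : ℝ} {K n : ℕ} (hn : 0 < n) (hsep : IsSepScale α n)
    (hd : 0 < d) (hρ : Real.exp (-(d * n)) ≤ 1 / (512 * (n : ℝ))) {a b : ℝ}
    (hab : 1 / (256 * (n : ℝ)) ≤ b - a) {F : Finset ℕ} (hF : F ⊆ goodIndices α d u L K n)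
    (hm : ∀ l ∈ F, (Set.Ioo a b ∩ sideInterval α d l).Nonempty) :
    (F.card : ℝ) ≤ 384 * (b - a) * n := by
  have hnr : (0 : ℝ) < n := by exact_mod_cast hn
  have h7 : 1 / (256 * (n : ℝ)) = 2 * (1 / (512 * (n : ℝ))) := by field_simp; norm_num
  have h8 : 0 < 1 / (512 * (n : ℝ)) := by positivity
  have h3 := card_le_of_separated (F := F) (s := 1 / (64 * (n : ℝ)))
    (A := a - 1 / (512 * (n : ℝ))) (W := 2 * (b - a))
    (g := fun l : ℕ => Int.fract ((l : ℝ) * α)) (by positivity) (by linarith) ?_ ?_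
  · have h4 : 2 * (b - a) / (1 / (64 * (n : ℝ))) = 128 * (b - a) * n := by field_simp; ring
    rw [h4] at h3
    have h5 : 1 ≤ 256 * (b - a) * n := by
      rw [div_le_iff₀ (by positivity)] at hab
      linarith
    linarith
  · intro x hx y hy hxy
    have hx' := hF hx
    have hy' := hF hy
    simp only [goodIndices, Finset.mem_filter, Finset.mem_Ico] at hx' hy'
    have h5 := hsep.le_distZ_sub (j := x) (k := y) (by exact_mod_cast hxy) (by omega)
    push_cast at h5
    exact h5.trans (distZ_le_abs_fract_sub_fract _ _)
  · intro l hl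
    have hl' := hF hl
    simp only [goodIndices, Finset.mem_filter, Finset.mem_Ico] at hl'
    obtain ⟨x, ⟨hx1, hx2⟩, hx3, hx4⟩ := hm l hl
    have h5 : Real.exp (-(d * l)) ≤ Real.exp (-(d * n)) := by
      have : (n : ℝ) ≤ l := by exact_mod_cast hl'.1.1
      gcongr
    have h6 := Real.exp_pos (-(d * l))
    constructor <;> linarith

lemma sum_min_meets_le {α d u L : ℝ} {K M : ℕ} {n : ℕ → ℕ} (hd : 0 < d)
    (hn : ∀ i, 2 * n i ≤ n (i + 1)) (hn0 : ∀ i, 0 < n i) (hK : ∀ i, K < n i)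
    (hsep : ∀ i, IsSepScale α (n i))
    (hρ : ∀ i, Real.exp (-(d * n i)) ≤ 1 / (512 * (n i : ℝ))) {a b : ℝ} {G : ℝ≥0∞}
    (hG : ENNReal.ofReal (24 * M * (b - a) / d) ≤ G) :
    ∑ p ∈ (Finset.range M).sigma fun i => goodIndices α d u L K (n i),
      (if (Set.Ioo a b ∩ sideInterval α d p.2).Nonempty then
        min G (ENNReal.ofReal (1 / (16 * d * n p.1))) else 0) ≤ 2 * G := by
  set P := (Finset.range M).sigma fun i => goodIndices α d u L K (n i) with hP
  have hmono : StrictMono n := strictMono_nat_of_lt_succ fun i => by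
    have := hn i; have := hn0 i; omega
  have hdbl : ∀ i j, i < j → 2 * n i ≤ n j := fun i j hij =>
    (hn i).trans (hmono.monotone hij)
  rw [← Finset.sum_filter]
  set Q := P.filter fun p => (Set.Ioo a b ∩ sideInterval α d p.2).Nonempty with hQ
  rcases Q.eq_empty_or_nonempty with he | hne
  · rw [he]; simp
  obtain ⟨p0, hp0, hmin⟩ := Finset.exists_min_image Q (fun p => p.1) hne
  rw [← Finset.add_sum_erase _ _ hp0, two_mul]
  refine add_le_add (min_le_left _ _) (le_trans ?_ hG)
  calc ∑ p ∈ Q.erase p0, min G (ENNReal.ofReal (1 / (16 * d * n p.1)))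
      ≤ ∑ p ∈ Q.erase p0, ENNReal.ofReal (1 / (16 * d * n p.1)) :=
        Finset.sum_le_sum fun p _ => min_le_right _ _
    _ = ∑ p ∈ P, if (Set.Ioo a b ∩ sideInterval α d p.2).Nonempty ∧ p ≠ p0 then
          ENNReal.ofReal (1 / (16 * d * n p.1)) else 0 := by
        rw [← Finset.sum_filter]
        refine Finset.sum_congr ?_ fun _ _ => rfl
        ext p
        simp only [hQ, Finset.mem_erase, Finset.mem_filter]
        tauto
    _ ≤ ∑ i ∈ Finset.range M, ENNReal.ofReal (24 * (b - a) / d) := by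
        rw [hP, Finset.sum_sigma]
        refine Finset.sum_le_sum fun i hi => ?_
        dsimp only
        rw [← Finset.sum_filter, Finset.sum_const]
        set F := (goodIndices α d u L K (n i)).filter fun l =>
          (Set.Ioo a b ∩ sideInterval α d l).Nonempty ∧ (⟨i, l⟩ : Σ _ : ℕ, ℕ) ≠ p0 with hF
        have hnr : (0 : ℝ) < n i := by exact_mod_cast hn0 i
        rcases F.eq_empty_or_nonempty with hFe | ⟨l, hl⟩
        · rw [hFe]; simp
        have hFm : ∀ l ∈ F, (Set.Ioo a b ∩ sideInterval α d l).Nonempty := fun l hl =>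
          (Finset.mem_filter.1 hl).2.1
        have hr : 1 / (256 * (n i : ℝ)) ≤ b - a := by
          rw [hF, Finset.mem_filter] at hl
          rw [hQ, Finset.mem_filter, hP, Finset.mem_sigma] at hp0
          have hp0i : p0.1 ≤ i := hmin ⟨i, l⟩ (by
            rw [hQ, Finset.mem_filter, hP, Finset.mem_sigma]
            exact ⟨⟨hi, hl.1⟩, hl.2.1⟩)
          have hw := hl.1
          have hw0 := hp0.1.2
          simp only [goodIndices, Finset.mem_filter, Finset.mem_Ico] at hw hw0
          have hll : p0.2 ≠ l := by
            intro h
            rcases hp0i.lt_or_eq with h' | h'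
            · have := hdbl _ _ h'
              omega
            · refine hl.2.2 ?_
              obtain ⟨x, y⟩ := p0
              simp only at h h'
              rw [h, h']
          refine le_of_meets_sideInterval (hmono.monotone hp0i) (hn0 i) (hK _) hp0.1.2 hl.1 hll
            (hsep i) ?_ hp0.2 hl.2.1
          refine le_trans ?_ (hρ i)
          have : (n i : ℝ) ≤ l := by exact_mod_cast hw.1.1
          gcongr
        have hcard := card_meets_sideInterval_le (hn0 i) (hsep i) hd (hρ i) hr
          (Finset.filter_subset _ _) hFm
        rw [nsmul_eq_mul, ← ENNReal.ofReal_natCast, ← ENNReal.ofReal_mul (by positivity)]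
        refine ENNReal.ofReal_le_ofReal ?_
        calc (F.card : ℝ) * (1 / (16 * d * n i))
            ≤ 384 * (b - a) * n i * (1 / (16 * d * n i)) := by gcongr
          _ = 24 * (b - a) / d := by field_simp; ring
    _ = ENNReal.ofReal (24 * M * (b - a) / d) := by
        rw [Finset.sum_const, nsmul_eq_mul, Finset.card_range, ← ENNReal.ofReal_natCast,
          ← ENNReal.ofReal_mul (by positivity)]
        congr 1
        ring

lemma sideInterval_eq (α d : ℝ) (l : ℕ) : sideInterval α d l =
    Set.Icc (Int.fract ((l : ℝ) * α) + Real.exp (-(d * l)) / 2)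
      (Int.fract ((l : ℝ) * α) + Real.exp (-(d * l)) / 2 + Real.exp (-(d * l)) / 2) := by
  rw [sideInterval]
  congr 1
  ring

lemma sideInterval_subset {α d u L : ℝ} {K n l : ℕ} (hl : l ∈ goodIndices α d u L K n) (hd : 0 < d)
    (hρ : Real.exp (-(d * n)) ≤ L / 2) : sideInterval α d l ⊆ Set.Icc u (u + L) := by
  simp only [goodIndices, Finset.mem_filter, Finset.mem_Ico] at hl
  have h5 : Real.exp (-(d * l)) ≤ Real.exp (-(d * n)) := by
    have : (n : ℝ) ≤ l := by exact_mod_cast hl.1.1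
    gcongr
  have h6 := Real.exp_pos (-(d * l))
  obtain ⟨h7, h8⟩ := hl.2.1
  refine Set.Icc_subset_Icc ?_ ?_ <;> linarith

lemma exists_light_index {α d u L : ℝ} {K M : ℕ} {n : ℕ → ℕ} (hd : 0 < d)
    (hn : ∀ i, 2 * n i ≤ n (i + 1)) (hn0 : ∀ i, 0 < n i) (hK : ∀ i, K < n i)
    (hsep : ∀ i, IsSepScale α (n i))
    (hρ : ∀ i, Real.exp (-(d * n i)) ≤ 1 / (512 * (n i : ℝ)))
    (hρL : ∀ i, Real.exp (-(d * n i)) ≤ L / 2) (hL : 0 < L)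
    (hcard : ∀ i, n i * L / 16 ≤ ((goodIndices α d u L K (n i)).card : ℝ)) {a b : ℕ → ℝ}
    (hM : ∀ j, (Set.Ioo (a j) (b j) ∩ Set.Icc u (u + L)).Nonempty →
      24 * M * (b j - a j) / d ≤ omegaS 1 (b j - a j))
    (hS : 2 * coverMass a b u L < ENNReal.ofReal (M * L / (256 * d))) :
    ∃ i, ∃ l ∈ goodIndices α d u L K (n i),
      coverMass a b (Int.fract ((l : ℝ) * α) + Real.exp (-(d * l)) / 2) (Real.exp (-(d * l)) / 2) <
        ENNReal.ofReal (1 / (16 * d * n i)) := by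
  by_contra! hcon
  set P := (Finset.range M).sigma fun i => goodIndices α d u L K (n i) with hP
  set g : ℕ → ℝ≥0∞ := fun j => ENNReal.ofReal (omegaS 1 (b j - a j)) with hg
  have h1 : ∀ p ∈ P, ENNReal.ofReal (1 / (16 * d * n p.1)) ≤
      ∑' j, if (Set.Ioo (a j) (b j) ∩ sideInterval α d p.2).Nonempty then
        min (g j) (ENNReal.ofReal (1 / (16 * d * n p.1))) else 0 := by
    intro p hp
    rw [hP, Finset.mem_sigma] at hp
    have h2 := hcon p.1 p.2 hp.2
    rw [coverMass, ← sideInterval_eq] at h2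
    refine (ENNReal.le_tsum_min h2).trans (le_of_eq (tsum_congr fun j => ?_))
    split_ifs
    · rfl
    · simp
  have h3 : ENNReal.ofReal (M * L / (256 * d)) ≤
      ∑ p ∈ P, ENNReal.ofReal (1 / (16 * d * n p.1)) := by
    rw [hP, Finset.sum_sigma]
    calc ENNReal.ofReal (M * L / (256 * d))
        = ∑ i ∈ Finset.range M, ENNReal.ofReal (L / (256 * d)) := by
          rw [Finset.sum_const, nsmul_eq_mul, Finset.card_range, ← ENNReal.ofReal_natCast,
            ← ENNReal.ofReal_mul (by positivity)]
          congr 1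
          ring
      _ ≤ _ := by
          refine Finset.sum_le_sum fun i _ => ?_
          dsimp only
          have hnr : (0 : ℝ) < n i := by exact_mod_cast hn0 i
          rw [Finset.sum_const, nsmul_eq_mul, ← ENNReal.ofReal_natCast,
            ← ENNReal.ofReal_mul (by positivity)]
          refine ENNReal.ofReal_le_ofReal ?_
          calc L / (256 * d) = n i * L / 16 * (1 / (16 * d * n i)) := by field_simp; norm_num
            _ ≤ _ := by gcongr; exact hcard i
  have h4 : ∑ p ∈ P, ENNReal.ofReal (1 / (16 * d * n p.1)) ≤ 2 * coverMass a b u L := by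
    refine (Finset.sum_le_sum h1).trans ?_
    rw [← Summable.tsum_finsetSum fun _ _ => ENNReal.summable, coverMass, ← ENNReal.tsum_mul_left]
    refine ENNReal.tsum_le_tsum fun j => ?_
    by_cases hj : (Set.Ioo (a j) (b j) ∩ Set.Icc u (u + L)).Nonempty
    · rw [if_pos hj]
      exact sum_min_meets_le hd hn hn0 hK hsep hρ (ENNReal.ofReal_le_ofReal (hM j hj))
    · refine le_of_eq_of_le (Finset.sum_eq_zero fun p hp => if_neg fun h => hj ?_) zero_le
      rw [hP, Finset.mem_sigma] at hp
      exact h.mono (Set.inter_subset_inter_right _ (sideInterval_subset hp.2 hd (hρL _)))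
  exact absurd (h3.trans h4) (not_le.2 hS)

lemma exists_doubling_seq {p : ℕ → Prop} (hp : ∀ N, ∃ n, N ≤ n ∧ p n) (N : ℕ) :
    ∃ n : ℕ → ℕ, (∀ i, 2 * n i ≤ n (i + 1)) ∧ (∀ i, N ≤ n i) ∧ ∀ i, p (n i) := by
  choose f hf hpf using hp
  let n : ℕ → ℕ := fun i => Nat.rec (f N) (fun _ m => f (2 * m)) i
  have hn : ∀ i, n (i + 1) = f (2 * n i) := fun i => rfl
  have h2 : ∀ i, 2 * n i ≤ n (i + 1) := fun i => by rw [hn]; exact hf _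
  refine ⟨n, h2, fun i => ?_, fun i => ?_⟩
  · induction i with
    | zero => exact hf N
    | succ i ih => have := h2 i; omega
  · cases i with
    | zero => exact hpf N
    | succ i => rw [hn]; exact hpf _

lemma distZ_sub_bounds_of_mem_sideInterval {α d x : ℝ} {l : ℕ} (hd : Real.exp (-(d * l)) < 1 / 2)
    (hx : x ∈ sideInterval α d l) :
    Real.exp (-(d * l)) / 2 ≤ distZ (x - l * α) ∧ distZ (x - l * α) ≤ Real.exp (-(d * l)) := by
  have h6 := Real.exp_pos (-(d * l))
  obtain ⟨h1, h2⟩ := hx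
  rw [← distZ_sub_fract, distZ_eq_self (by linarith) (by linarith)]
  constructor <;> linarith

/-- Inside `[u, u + L]` there is a much shorter interval, consisting of points resonating with a
multiple of `α` at rate `d` and with no other multiple of comparable index, on which the cover is
light. -/
lemma exists_child {α : ℝ} (hα : Irrational α) {d u L : ℝ} (hd : 0 < d) (hu : 0 ≤ u) (hL : 0 < L)
    (hu1 : u + L ≤ 1) {K : ℕ} (hK : Real.exp (-(d * K)) ≤ L * (1 - Real.exp (-d)) / 12288)
    {M : ℕ} {a b : ℕ → ℝ}
    (hM : ∀ j, (Set.Ioo (a j) (b j) ∩ Set.Icc u (u + L)).Nonempty →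
      24 * M * (b j - a j) / d ≤ omegaS 1 (b j - a j))
    (hS : 2 * coverMass a b u L < ENNReal.ofReal (M * L / (256 * d))) (N : ℕ) :
    ∃ (v L' : ℝ) (l K' : ℕ), L' = Real.exp (-(d * l)) / 2 ∧ N ≤ l ∧ K < l ∧ l ≤ K' ∧ u ≤ v ∧
      v + L' ≤ u + L ∧
      (∀ x ∈ Set.Icc v (v + L'), distZ (x - l * α) ≤ Real.exp (-(d * l)) ∧
        ∀ k : ℤ, k.natAbs ≤ K' → 0 < distZ (x - k * α) ∧
          (K < k.natAbs → Real.exp (-(d * k.natAbs)) / 2 ≤ distZ (x - k * α))) ∧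
      Real.exp (-(d * K')) ≤ L' * (1 - Real.exp (-d)) / 12288 ∧
      coverMass a b v L' ≤ ENNReal.ofReal (1 / (4 * (-Real.log L'))) := by
  obtain ⟨q, p, hqN, hq, hcop, hpq⟩ := exists_large_good_denominator hα ⌈12 / L⌉₊
  have hqL : 12 ≤ q * L := by
    have : 12 / L ≤ q := (Nat.le_ceil _).trans (by exact_mod_cast hqN)
    rwa [div_le_iff₀ hL] at this
  have he1 : 0 < 1 - Real.exp (-d) := by
    have : Real.exp (-d) < 1 := by rw [Real.exp_lt_one_iff]; linarith
    linarith
  have hlin : Tendsto (fun n : ℕ => d * (n : ℝ)) atTop atTop :=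
    tendsto_natCast_atTop_atTop.const_mul_atTop hd
  have hexp : Tendsto (fun n : ℕ => Real.exp (-(d * n))) atTop (nhds 0) :=
    Real.tendsto_exp_neg_atTop_nhds_zero.comp hlin
  have hnexp : Tendsto (fun n : ℕ => (d * n) ^ 1 * Real.exp (-(d * n))) atTop (nhds 0) :=
    (Real.tendsto_pow_mul_exp_neg_atTop_nhds_zero 1).comp hlin
  have hev : ∀ᶠ n : ℕ in atTop, q ≤ n ∧ K < n ∧ N ≤ n ∧ Real.exp (-(d * n)) ≤ L / 2 ∧
      (d * n) ^ 1 * Real.exp (-(d * n)) ≤ d / 512 ∧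
      Real.exp (-(d * n)) ≤ (1 - Real.exp (-d)) / 24576 ∧ 1 ≤ d * n ∧
      Real.exp (-(d * n)) < 1 / 2 := by
    refine (eventually_ge_atTop q).and ((eventually_gt_atTop K).and ((eventually_ge_atTop N).and
      ((hexp.eventually_le_const (by positivity)).and ((hnexp.eventually_le_const
      (by positivity)).and ((hexp.eventually_le_const (by positivity)).and
      ((hlin.eventually_ge_atTop 1).and (hexp.eventually_lt_const (by norm_num))))))))
  obtain ⟨N1, hN1⟩ := eventually_atTop.1 hev
  obtain ⟨n, hn2, hnN, hnp⟩ := exists_doubling_seq (p := fun n => 0 < n ∧ IsSepScale α n)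
    (fun N => exists_large_isSepScale hα N) N1
  have hρ : ∀ i, Real.exp (-(d * n i)) ≤ 1 / (512 * (n i : ℝ)) := fun i => by
    have hnr : (0 : ℝ) < n i := by exact_mod_cast (hnp i).1
    have := (hN1 _ (hnN i)).2.2.2.2.1
    rw [le_div_iff₀ (by positivity)]
    rw [le_div_iff₀ (by positivity)] at this
    refine le_of_mul_le_mul_left ?_ hd
    linarith
  obtain ⟨i, l, hl, hlight⟩ := exists_light_index hd hn2 (fun i => (hnp i).1)
    (fun i => (hN1 _ (hnN i)).2.1) (fun i => (hnp i).2) hρ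
    (fun i => (hN1 _ (hnN i)).2.2.2.1) hL
    (fun i => le_card_goodIndices hq hcop hpq hd hu hL hu1 hqL hK (hN1 _ (hnN i)).1 (hnp i).2) hM hS
  obtain ⟨-, hKn, hNn, hLn, -, hen, hdn, hhalf⟩ := hN1 _ (hnN i)
  have hn0 := (hnp i).1
  have hsep := (hnp i).2
  have hρi := hρ i
  have hsub := sideInterval_subset hl hd hLn
  have hl' := hl
  simp only [goodIndices, Finset.mem_filter, Finset.mem_Ico] at hl'
  set m := n i with hm
  have hmr : (0 : ℝ) < m := by exact_mod_cast hn0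
  have hml : (m : ℝ) ≤ l := by exact_mod_cast hl'.1.1
  have hlm : (l : ℝ) ≤ 2 * m := by
    have : l ≤ 2 * m := by omega
    exact_mod_cast this
  have hel : Real.exp (-(d * l)) ≤ Real.exp (-(d * m)) := by gcongr
  have hpos := Real.exp_pos (-(d * l))
  rw [sideInterval_eq, Set.Icc_subset_Icc_iff (by linarith)] at hsub
  refine ⟨_, _, l, 4 * m, rfl, by omega, by omega, by omega, hsub.1, hsub.2, ?_, ?_, ?_⟩
  · rw [← sideInterval_eq]
    intro x hx
    obtain ⟨hb1, hb2⟩ := distZ_sub_bounds_of_mem_sideInterval (hel.trans_lt hhalf) hx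
    refine ⟨hb2, fun k hk => ?_⟩
    by_cases hkl : k = l
    · subst hkl
      simp only [Int.cast_natCast, Int.natAbs_natCast]
      exact ⟨by linarith, fun _ => hb1⟩
    · have h1 := hsep.le_distZ_sub (j := l) (k := k) (Ne.symm hkl) (by omega)
      have h2 : distZ (l * α - k * α) ≤ distZ (x - k * α) + Real.exp (-(d * l)) := by
        have h3 := distZ_le_add_abs_sub (Int.fract (l * α) - k * α) (x - k * α)
        rw [distZ_fract_sub] at h3
        refine h3.trans ?_
        gcongr
        rw [abs_le]
        obtain ⟨h4, h5⟩ := hx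
        constructor <;> linarith
      have h6 : 1 / (64 * (m : ℝ)) = 8 * (1 / (512 * (m : ℝ))) := by field_simp; norm_num
      have h7 : 0 < 1 / (512 * (m : ℝ)) := by positivity
      rw [h6] at h1
      simp only [Int.cast_natCast] at h1
      refine ⟨by linarith, fun hkK => ?_⟩
      have h8 := hl'.2.2 k hkK hk hkl
      have h9 := Real.exp_pos (-(d * k.natAbs))
      linarith
  · have h1 : Real.exp (-(d * (4 * m : ℕ))) ≤ Real.exp (-(d * m)) * Real.exp (-(d * l)) := by
      rw [← Real.exp_add]
      refine Real.exp_le_exp.2 ?_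
      push_cast
      nlinarith
    have h2 : Real.exp (-(d * m)) * Real.exp (-(d * l)) ≤
        (1 - Real.exp (-d)) / 24576 * Real.exp (-(d * l)) := by gcongr
    linarith
  · refine hlight.le.trans (ENNReal.ofReal_le_ofReal ?_)
    have hlog : -Real.log (Real.exp (-(d * l)) / 2) = d * l + Real.log 2 := by
      rw [Real.log_div hpos.ne' (by norm_num), Real.log_exp]
      ring
    rw [hlog]
    have hlog2 : Real.log 2 < 1 := by
      have := Real.log_two_lt_d9; linarith
    have hlog2' : 0 < Real.log 2 := Real.log_pos (by norm_num)
    refine one_div_le_one_div_of_le (by positivity) ?_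
    nlinarith

lemma omegaS_of_pos (s : ℝ) {r : ℝ} (hr : 0 < r) : omegaS s r = (-Real.log r) ^ (-s) := if_pos hr

lemma omegaS_one_of_pos {r : ℝ} (hr : 0 < r) : omegaS 1 r = 1 / (-Real.log r) := by
  rw [omegaS_of_pos 1 hr, Real.rpow_neg_one, one_div]

lemma mul_neg_log_le {r : ℝ} (hr : 0 < r) : r * (-Real.log r) ≤ 2 * √r := by
  have h1 : 0 < √r := Real.sqrt_pos.2 hr
  have h2 := Real.log_le_sub_one_of_pos (inv_pos.2 h1)
  rw [Real.log_inv, Real.log_sqrt hr.le] at h2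
  have h3 : -Real.log r ≤ 2 * (√r)⁻¹ := by linarith
  calc r * (-Real.log r) ≤ r * (2 * (√r)⁻¹) := by gcongr
    _ = 2 * √r := by
      nth_rewrite 1 [← Real.mul_self_sqrt hr.le]
      field_simp

lemma mul_le_omegaS_one {c r : ℝ} (hc : 0 ≤ c) (hr : 0 < r) (hr1 : r < 1) (h : c * (2 * √r) ≤ 1) :
    c * r ≤ omegaS 1 r := by
  have h1 : 0 < -Real.log r := by linarith [Real.log_neg hr hr1]
  rw [omegaS_one_of_pos hr, le_div_iff₀ h1]
  calc c * r * (-Real.log r) = c * (r * (-Real.log r)) := by ring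
    _ ≤ c * (2 * √r) := mul_le_mul_of_nonneg_left (mul_neg_log_le hr) hc
    _ ≤ 1 := h

lemma neg_log_le_of_coverMass_le {a b : ℕ → ℝ} {u L : ℝ} (hL : 0 < L) (hL1 : L < 1)
    (h : coverMass a b u L ≤ ENNReal.ofReal (1 / (4 * (-Real.log L)))) {j : ℕ}
    (hj : (Set.Ioo (a j) (b j) ∩ Set.Icc u (u + L)).Nonempty) (hr : b j - a j < 1) :
    4 * (-Real.log L) ≤ -Real.log (b j - a j) := by
  have hr0 : 0 < b j - a j := by
    obtain ⟨x, ⟨h1, h2⟩, -⟩ := hj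
    linarith
  have h1 : ENNReal.ofReal (omegaS 1 (b j - a j)) ≤ coverMass a b u L := by
    refine le_trans (le_of_eq ?_) (ENNReal.le_tsum j)
    rw [if_pos hj]
  have hlL : 0 < -Real.log L := by linarith [Real.log_neg hL hL1]
  have hlr : 0 < -Real.log (b j - a j) := by linarith [Real.log_neg hr0 hr]
  have h2 := (ENNReal.ofReal_le_ofReal_iff (by positivity)).1 (h1.trans h)
  rw [omegaS_one_of_pos hr0] at h2
  exact (one_div_le_one_div hlr (by positivity)).1 h2

/-- An interval on which the cover `a, b` is light, in a form suitable for iteration. -/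
structure IsLightInterval (a b : ℕ → ℝ) (η d : ℝ) (u L : ℝ) (K : ℕ) : Prop where
  nonneg : 0 ≤ u
  pos : 0 < L
  le_one : u + L ≤ 1
  le : L ≤ η
  exp_le : Real.exp (-(d * K)) ≤ L * (1 - Real.exp (-d)) / 12288
  mass_le : coverMass a b u L ≤ ENNReal.ofReal (1 / (4 * (-Real.log L)))

/-- `[u', u' + L']` is a subinterval of `[u, u + L]` whose points resonate with some multiple of `α`
at rate `d`, but with no multiple of `α` of index in `(K, K']` at a larger rate. -/
structure IsResonantChild (α d u L : ℝ) (K : ℕ) (u' L' : ℝ) (K' : ℕ) : Prop where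
  le_left : u ≤ u'
  le_right : u' + L' ≤ u + L
  lt : K < K'
  exists_resonance : ∀ x ∈ Set.Icc u' (u' + L'), ∃ l : ℕ, K < l ∧
    distZ (x - l * α) ≤ Real.exp (-(d * l))
  pos : ∀ x ∈ Set.Icc u' (u' + L'), ∀ k : ℤ, k.natAbs ≤ K' → 0 < distZ (x - k * α)
  le_distZ : ∀ x ∈ Set.Icc u' (u' + L'), ∀ k : ℤ, K < k.natAbs → k.natAbs ≤ K' →
    Real.exp (-(d * k.natAbs)) / 2 ≤ distZ (x - k * α)

lemma exists_light_child {α : ℝ} (hα : Irrational α) {d u L : ℝ} (hd : 0 < d) (hu : 0 ≤ u)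
    (hL : 0 < L) (hu1 : u + L ≤ 1) {K : ℕ}
    (hK : Real.exp (-(d * K)) ≤ L * (1 - Real.exp (-d)) / 12288) {M : ℕ} {a b : ℕ → ℝ}
    (hM : ∀ j, (Set.Ioo (a j) (b j) ∩ Set.Icc u (u + L)).Nonempty →
      24 * M * (b j - a j) / d ≤ omegaS 1 (b j - a j))
    (hS : 2 * coverMass a b u L < ENNReal.ofReal (M * L / (256 * d))) {η : ℝ} (hη : 0 < η) :
    ∃ (u' L' : ℝ) (K' : ℕ), IsLightInterval a b η d u' L' K' ∧
      IsResonantChild α d u L K u' L' K' := by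
  have hlin : Tendsto (fun n : ℕ => d * (n : ℝ)) atTop atTop :=
    tendsto_natCast_atTop_atTop.const_mul_atTop hd
  have hexp : Tendsto (fun n : ℕ => Real.exp (-(d * n))) atTop (nhds 0) :=
    Real.tendsto_exp_neg_atTop_nhds_zero.comp hlin
  obtain ⟨N, hN⟩ := eventually_atTop.1 (hexp.eventually_le_const hη)
  obtain ⟨v, L', l, K', rfl, hNl, hKl, hlK, huv, hvL, hx, hK', hmass⟩ :=
    exists_child hα hd hu hL hu1 hK hM hS N
  have hpos := Real.exp_pos (-(d * l))
  refine ⟨v, _, K', ⟨by linarith, by positivity, by linarith, by linarith [hN l hNl], hK', hmass⟩,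
    ⟨huv, hvL, by omega, fun x hxv => ⟨l, hKl, (hx x hxv).1⟩,
      fun x hxv k hk => ((hx x hxv).2 k hk).1, fun x hxv k hk hk' => ((hx x hxv).2 k hk').2 hk⟩⟩

lemma IsLightInterval.exists_child {α : ℝ} (hα : Irrational α) {a b : ℕ → ℝ}
    (hab : ∀ j, b j - a j < 1) {η η' d d' u L : ℝ} {K : ℕ} (hd : 0 < d) (hdd' : d ≤ d')
    (hη : η ≤ 1 / 24576) (hηd : η ≤ d) (hη' : 0 < η') (h : IsLightInterval a b η d u L K) :
    ∃ (u' L' : ℝ) (K' : ℕ), IsLightInterval a b η' d' u' L' K' ∧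
      IsResonantChild α d' u L K u' L' K' := by
  have hd' : 0 < d' := hd.trans_le hdd'
  have hL := h.pos
  have hLs : L ≤ 1 / 24576 := h.le.trans hη
  have hLd : L ≤ d' := (h.le.trans hηd).trans hdd'
  have hK : Real.exp (-(d' * K)) ≤ L * (1 - Real.exp (-d')) / 12288 :=
    calc Real.exp (-(d' * K)) ≤ Real.exp (-(d * K)) := by gcongr
      _ ≤ L * (1 - Real.exp (-d)) / 12288 := h.exp_le
      _ ≤ L * (1 - Real.exp (-d')) / 12288 := by gcongr
  have hM1 := Nat.le_ceil (256 * d' / L)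
  have hM2 := Nat.ceil_lt_add_one (a := 256 * d' / L) (by positivity)
  set M := ⌈256 * d' / L⌉₊
  have hM3 : (M : ℝ) ≤ 512 * d' / L := by
    have : 1 ≤ 256 * d' / L := by rw [le_div_iff₀ hL]; linarith
    have h2 : 512 * d' / L = 256 * d' / L + 256 * d' / L := by ring
    linarith
  refine exists_light_child hα hd' h.nonneg hL h.le_one hK (M := M) ?_ ?_ hη'
  · intro j hj
    have hlog := neg_log_le_of_coverMass_le hL (by linarith) h.mass_le hj (hab j)
    have hr0 : 0 < b j - a j := by
      obtain ⟨x, ⟨h1, h2⟩, -⟩ := hj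
      linarith
    have hr : b j - a j ≤ L ^ 4 := by
      rw [← Real.log_le_log_iff hr0 (by positivity), Real.log_pow]
      push_cast
      linarith
    have hsq : √(b j - a j) ≤ L ^ 2 := by
      rw [Real.sqrt_le_left (by positivity)]
      linarith [show (L ^ 2) ^ 2 = L ^ 4 by ring]
    have h1 := mul_le_omegaS_one (c := 24 * M / d') (by positivity) hr0 (hab j) ?_
    · refine le_trans (le_of_eq ?_) h1
      ring
    · calc 24 * M / d' * (2 * √(b j - a j)) ≤ 24 * (512 * d' / L) / d' * (2 * L ^ 2) := by gcongr
        _ = 24576 * L := by field_simp; norm_num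
        _ ≤ 1 := by linarith
  · have hlog : 1 ≤ -Real.log L := by
      have h1 : Real.log L ≤ Real.log (Real.exp (-1)) := by
        refine Real.log_le_log hL (hLs.trans ?_)
        have := Real.exp_neg_one_gt_d9
        linarith
      rw [Real.log_exp] at h1
      linarith
    calc 2 * coverMass a b u L ≤ 2 * ENNReal.ofReal (1 / (4 * (-Real.log L))) := by
          gcongr; exact h.mass_le
      _ ≤ 2 * ENNReal.ofReal (1 / 4) := by
          gcongr
          linarith
      _ = ENNReal.ofReal (1 / 2) := by
          rw [← ENNReal.ofReal_ofNat 2, ← ENNReal.ofReal_mul (by norm_num)]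
          norm_num
      _ < ENNReal.ofReal (M * L / (256 * d')) := by
          rw [ENNReal.ofReal_lt_ofReal_iff_of_nonneg (by norm_num), lt_div_iff₀ (by positivity)]
          rw [div_le_iff₀ hL] at hM1
          linarith

/-- Short covers of bounded total `ω₁`-mass miss some point whose resonance strength is exactly the
limit of `d`. -/
lemma exists_resonant_not_mem_cover {α : ℝ} (hα : Irrational α) {d : ℕ → ℝ} (hd : Monotone d)
    (hd0 : 0 < d 0) (H : ℝ) :
    ∃ ε : ℝ, 0 < ε ∧ ε < 1 ∧ ∀ a b : ℕ → ℝ, (∀ j, b j - a j ≤ ε) →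
      ∑' j, ENNReal.ofReal (omegaS 1 (b j - a j)) ≤ ENNReal.ofReal H →
      ∃ x ∈ Set.Icc (0 : ℝ) 1, (∀ j, x ∉ Set.Ioo (a j) (b j)) ∧
        (∀ k : ℤ, 0 < distZ (x - k * α)) ∧ ∃ K : ℕ → ℕ, StrictMono K ∧
        ∀ n, (∃ l : ℕ, K n < l ∧ distZ (x - l * α) ≤ Real.exp (-(d (n + 1) * l))) ∧
          ∀ k : ℤ, K n < k.natAbs → k.natAbs ≤ K (n + 1) →
            Real.exp (-(d (n + 1) * k.natAbs)) / 2 ≤ distZ (x - k * α) := by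
  obtain ⟨M, hM⟩ := exists_nat_gt (2 * |H| * (256 * d 0))
  have hdpos : ∀ n, 0 < d n := fun n => hd0.trans_le (hd (Nat.zero_le n))
  set c : ℝ := 24 * M / d 0 with hc
  have hc0 : 0 ≤ c := by positivity
  refine ⟨(1 / (2 * c + 2)) ^ 2, by positivity, ?_, fun a b hab hsum => ?_⟩
  · have : 1 / (2 * c + 2) ≤ 1 / 2 := by gcongr; linarith
    have h2 : 0 < 1 / (2 * c + 2) := by positivity
    nlinarith
  have hε : 1 / (2 * c + 2) ≤ 1 / 2 := by gcongr; linarith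
  have hε0 : 0 < 1 / (2 * c + 2) := by positivity
  have hab1 : ∀ j, b j - a j < 1 := fun j => (hab j).trans_lt (by nlinarith)
  have he1 : 0 < 1 - Real.exp (-d 0) := by
    have : Real.exp (-d 0) < 1 := by rw [Real.exp_lt_one_iff]; linarith
    linarith
  let η : ℕ → ℝ := fun n => min (min (1 / 24576) (d 0)) (1 / (n + 1))
  have hη0 : ∀ n, 0 < η n := fun n => lt_min (lt_min (by norm_num) hd0) (by positivity)
  have hη1 : ∀ n, η n ≤ 1 / 24576 := fun n => (min_le_left _ _).trans (min_le_left _ _)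
  have hη2 : ∀ n, η n ≤ d n := fun n =>
    ((min_le_left _ _).trans (min_le_right _ _)).trans (hd (Nat.zero_le n))
  have hη3 : ∀ n : ℕ, η n ≤ 1 / (n + 1) := fun n => min_le_right _ _
  have hlin : Tendsto (fun n : ℕ => d 0 * (n : ℝ)) atTop atTop :=
    tendsto_natCast_atTop_atTop.const_mul_atTop hd0
  have hexp : Tendsto (fun n : ℕ => Real.exp (-(d 0 * n))) atTop (nhds 0) :=
    Real.tendsto_exp_neg_atTop_nhds_zero.comp hlin
  obtain ⟨K0, hK0⟩ := (hexp.eventually_le_const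
    (show 0 < 1 * (1 - Real.exp (-d 0)) / 12288 by positivity)).exists
  obtain ⟨u0, L0, K1, hlight0, -⟩ := exists_light_child hα hd0 le_rfl one_pos (by norm_num)
    hK0 (M := M) (a := a) (b := b) (by
      rintro j ⟨x, ⟨h1, h2⟩, -⟩
      have hr0 : 0 < b j - a j := by linarith
      have hsq : √(b j - a j) ≤ 1 / (2 * c + 2) := by
        rw [Real.sqrt_le_left (by positivity)]
        exact hab j
      have h3 := mul_le_omegaS_one (c := c) hc0 hr0 (hab1 j) (by
        calc c * (2 * √(b j - a j)) ≤ c * (2 * (1 / (2 * c + 2))) := by gcongr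
          _ = 2 * c / (2 * c + 2) := by ring
          _ ≤ 1 := by rw [div_le_one (by positivity)]; linarith)
      refine le_trans (le_of_eq ?_) h3
      rw [hc]; ring) (by
      calc 2 * coverMass a b 0 1 ≤ 2 * ENNReal.ofReal H := by
            gcongr
            refine le_trans (ENNReal.tsum_le_tsum fun j => ?_) hsum
            split_ifs
            · exact le_rfl
            · exact zero_le
        _ ≤ 2 * ENNReal.ofReal |H| := by gcongr; exact le_abs_self H
        _ = ENNReal.ofReal (2 * |H|) := by
            rw [ENNReal.ofReal_mul (by norm_num), ENNReal.ofReal_ofNat]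
        _ < ENNReal.ofReal (M * 1 / (256 * d 0)) := by
            rw [ENNReal.ofReal_lt_ofReal_iff_of_nonneg (by positivity), lt_div_iff₀ (by positivity)]
            linarith) (hη0 0)
  have hstep : ∀ (n : ℕ) (t : {t : ℝ × ℝ × ℕ // IsLightInterval a b (η n) (d n) t.1 t.2.1 t.2.2}),
      ∃ t' : {t : ℝ × ℝ × ℕ // IsLightInterval a b (η (n + 1)) (d (n + 1)) t.1 t.2.1 t.2.2},
        IsResonantChild α (d (n + 1)) t.1.1 t.1.2.1 t.1.2.2 t'.1.1 t'.1.2.1 t'.1.2.2 := by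
    rintro n ⟨t, ht⟩
    obtain ⟨u', L', K', h1, h2⟩ := ht.exists_child hα hab1 (hdpos n) (hd n.le_succ) (hη1 n) (hη2 n)
      (hη0 (n + 1))
    exact ⟨⟨(u', L', K'), h1⟩, h2⟩
  choose f hf using hstep
  let t : ∀ n : ℕ, {t : ℝ × ℝ × ℕ // IsLightInterval a b (η n) (d n) t.1 t.2.1 t.2.2} :=
    fun n => Nat.rec ⟨(u0, L0, K1), hlight0⟩ (fun n s => f n s) n
  have ht : ∀ n, IsResonantChild α (d (n + 1)) (t n).1.1 (t n).1.2.1 (t n).1.2.2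
      (t (n + 1)).1.1 (t (n + 1)).1.2.1 (t (n + 1)).1.2.2 := fun n => hf n (t n)
  let I : ℕ → Set ℝ := fun n => Set.Icc (t n).1.1 ((t n).1.1 + (t n).1.2.1)
  have hpos := fun n => (t n).2.pos
  obtain ⟨x, hx⟩ := IsCompact.nonempty_iInter_of_sequence_nonempty_isCompact_isClosed I
    (fun n => Set.Icc_subset_Icc (ht n).le_left (ht n).le_right)
    (fun n => Set.nonempty_Icc.2 (by linarith [hpos n])) isCompact_Icc (fun n => isClosed_Icc)
  have hx' : ∀ n, x ∈ I n := Set.mem_iInter.1 hx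
  have hKmono : StrictMono fun n => (t n).1.2.2 := strictMono_nat_of_lt_succ fun n => (ht n).lt
  refine ⟨x, ?_, ?_, ?_, fun n => (t n).1.2.2, hKmono, fun n =>
    ⟨(ht n).exists_resonance x (hx' (n + 1)), (ht n).le_distZ x (hx' (n + 1))⟩⟩
  · have h0 := hx' 0
    have h1 := (t 0).2.nonneg
    have h2 := (t 0).2.le_one
    exact ⟨h1.trans h0.1, h0.2.trans h2⟩
  · intro j hj
    have hr0 : 0 < b j - a j := by linarith [hj.1, hj.2]
    obtain ⟨n, hn⟩ := exists_nat_one_div_lt hr0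
    have hLn : (t n).1.2.1 < b j - a j := ((t n).2.le.trans (hη3 n)).trans_lt hn
    have h1 := neg_log_le_of_coverMass_le (hpos n) (hLn.trans (hab1 j)) (t n).2.mass_le
      ⟨x, hj, hx' n⟩ (hab1 j)
    have h2 := Real.log_lt_log (hpos n) hLn
    have h3 := Real.log_neg hr0 (hab1 j)
    linarith
  · intro k
    have h1 : k.natAbs ≤ (t (k.natAbs + 1)).1.2.2 :=
      (Nat.le_succ _).trans (hKmono.id_le (k.natAbs + 1))
    exact (ht k.natAbs).pos x (hx' (k.natAbs + 1)) k h1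

lemma tendsto_natAbs_cofinite : Tendsto Int.natAbs cofinite atTop := by
  refine tendsto_atTop.2 fun N => ?_
  rw [eventually_cofinite]
  refine (Set.finite_Icc (-(N : ℤ)) N).subset fun k hk => ?_
  simp only [Set.mem_ofPred_eq, not_le] at hk
  rw [Set.mem_Icc]
  omega

/-- The level `n` of a sequence of strictly increasing thresholds that contains a given integer. -/
lemma exists_lt_le_succ_of_strictMono {K : ℕ → ℕ} (hK : StrictMono K) {m : ℕ} (hm : K 0 < m) :
    ∃ n, K n < m ∧ m ≤ K (n + 1) := by
  have h : ∃ n, m ≤ K n := ⟨m, hK.id_le m⟩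
  obtain ⟨n, hn⟩ : ∃ n, Nat.find h = n + 1 := by
    refine Nat.exists_eq_succ_of_ne_zero fun h0 => ?_
    have := Nat.find_spec h
    rw [h0] at this
    omega
  refine ⟨n, ?_, hn ▸ Nat.find_spec h⟩
  exact not_le.1 (Nat.find_min h (by omega))

lemma resStrength_of_distZ_pos {α x : ℝ} (h : ∀ k : ℤ, 0 < distZ (x - k * α)) :
    resStrength α x = limsup
      (fun k : ℤ => ENNReal.ofReal (-Real.log (distZ (x - (k : ℝ) * α)) / |(k : ℝ)|)) cofinite := by
  refine if_neg ?_
  rintro ⟨k, m, rfl⟩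
  have h1 := h k
  have h2 := distZ_le_abs_sub_intCast ((k : ℝ) * α + m - k * α) m
  simp only [add_sub_cancel_left, sub_self, abs_zero] at h1 h2
  linarith

/-- Infinitely many resonances of strength at least `c` force resonance strength at least `c`. -/
lemma ofReal_le_resStrength {α x c : ℝ} (h : ∀ k : ℤ, 0 < distZ (x - k * α))
    (hc : ∀ N : ℕ, ∃ l : ℕ, N < l ∧ distZ (x - l * α) ≤ Real.exp (-(c * l))) :
    ENNReal.ofReal c ≤ resStrength α x := by
  rw [resStrength_of_distZ_pos h]
  refine le_limsup_of_frequently_le ?_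
  rw [Filter.frequently_cofinite_iff_infinite]
  intro hfin
  obtain ⟨N, hN⟩ := (hfin.image Int.natAbs).bddAbove
  obtain ⟨l, hl, hle⟩ := hc N
  refine absurd (hN ⟨(l : ℤ), ?_, rfl⟩) (by simpa using hl)
  have hl0 : (0 : ℝ) < l := by exact_mod_cast (Nat.zero_le N).trans_lt hl
  simp only [Set.mem_ofPred_eq, Int.cast_natCast, abs_of_pos hl0]
  refine ENNReal.ofReal_le_ofReal ((le_div_iff₀ hl0).2 ?_)
  have hp := h l
  rw [Int.cast_natCast] at hp
  have := Real.log_le_log hp hle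
  rw [Real.log_exp] at this
  linarith

/-- If all large resonances have strength at most `c`, up to a factor `2` in the distance, then the
resonance strength is at most `c`. -/
lemma resStrength_le_ofReal {α x c : ℝ} (hc0 : 0 ≤ c) (h : ∀ k : ℤ, 0 < distZ (x - k * α)) (N : ℕ)
    (hc : ∀ k : ℤ, N < k.natAbs → Real.exp (-(c * k.natAbs)) / 2 ≤ distZ (x - k * α)) :
    resStrength α x ≤ ENNReal.ofReal c := by
  rw [resStrength_of_distZ_pos h]
  refine ENNReal.le_of_forall_pos_le_add fun ε hε _ => ?_
  obtain ⟨M, hM⟩ := exists_nat_gt (Real.log 2 / ε)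
  refine limsup_le_of_le (h := ?_)
  filter_upwards [tendsto_natAbs_cofinite.eventually_gt_atTop N,
    tendsto_natAbs_cofinite.eventually_gt_atTop M] with k hk hkM
  have hk0 : (0 : ℝ) < k.natAbs := by exact_mod_cast (Nat.zero_le N).trans_lt hk
  have hkM' : (M : ℝ) < k.natAbs := by exact_mod_cast hkM
  have hε' : (0 : ℝ) < ε := hε
  rw [div_lt_iff₀ hε'] at hM
  rw [← ENNReal.ofReal_coe_nnreal, ← ENNReal.ofReal_add hc0 hε'.le]
  refine ENNReal.ofReal_le_ofReal ?_
  have habs : |(k : ℝ)| = k.natAbs := by rw [Nat.cast_natAbs, Int.cast_abs]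
  rw [habs, div_le_iff₀ hk0]
  have h1 := Real.log_le_log (by positivity) (hc k hk)
  rw [Real.log_div (Real.exp_ne_zero _) (by norm_num), Real.log_exp] at h1
  nlinarith

lemma omegaS_of_nonpos (s : ℝ) {r : ℝ} (hr : r ≤ 0) : omegaS s r = 0 := if_neg hr.not_gt

lemma omegaS_one_le {s r : ℝ} (hs : s ≤ 1) (hr : r ≤ Real.exp (-1)) : omegaS 1 r ≤ omegaS s r := by
  rcases le_or_gt r 0 with h0 | h0
  · rw [omegaS_of_nonpos _ h0, omegaS_of_nonpos _ h0]
  · have h1 := Real.log_le_log h0 hr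
    rw [Real.log_exp] at h1
    rw [omegaS_of_pos _ h0, omegaS_of_pos _ h0]
    exact Real.rpow_le_rpow_of_exponent_le (by linarith) (by linarith)

/-- Every level set contains the points produced by a suitable sequence of strengths. -/
lemma exists_seq_mem_resSet (α : ℝ) {δ : ℝ≥0∞} (hδ : 0 < δ) :
    ∃ d : ℕ → ℝ, Monotone d ∧ 0 < d 0 ∧ ∀ x ∈ Set.Icc (0 : ℝ) 1,
      (∀ k : ℤ, 0 < distZ (x - k * α)) → ∀ K : ℕ → ℕ, StrictMono K →
      (∀ n, (∃ l : ℕ, K n < l ∧ distZ (x - l * α) ≤ Real.exp (-(d (n + 1) * l))) ∧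
          ∀ k : ℤ, K n < k.natAbs → k.natAbs ≤ K (n + 1) →
            Real.exp (-(d (n + 1) * k.natAbs)) / 2 ≤ distZ (x - k * α)) → x ∈ resSet α δ := by
  rcases eq_or_ne δ ⊤ with rfl | hfin
  · refine ⟨fun n => n + 1, fun m n h => by simpa using h, by simp, fun x hx hpos K hK h =>
      ⟨hx, ENNReal.eq_top_of_forall_nnreal_le fun c => ?_⟩⟩
    rw [← ENNReal.ofReal_coe_nnreal]
    refine ofReal_le_resStrength hpos fun N => ?_
    obtain ⟨C, hC⟩ := exists_nat_gt (c : ℝ)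
    obtain ⟨l, hl, hle⟩ := (h (N + C)).1
    refine ⟨l, (Nat.le_add_right N C).trans_lt ((hK.id_le _).trans_lt hl), hle.trans ?_⟩
    rw [Real.exp_le_exp, neg_le_neg_iff]
    push_cast
    gcongr
    have : (0 : ℝ) ≤ N := Nat.cast_nonneg N
    linarith
  · have hδ0 : 0 < δ.toReal := ENNReal.toReal_pos hδ.ne' hfin
    refine ⟨fun _ => δ.toReal, monotone_const, hδ0, fun x hx hpos K hK h => ⟨hx, ?_⟩⟩
    rw [← ENNReal.ofReal_toReal hfin]
    refine le_antisymm (resStrength_le_ofReal hδ0.le hpos (K 0) fun k hk => ?_)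
      (ofReal_le_resStrength hpos fun N => ?_)
    · obtain ⟨n, h1, h2⟩ := exists_lt_le_succ_of_strictMono hK hk
      exact (h n).2 k h1 h2
    · obtain ⟨l, hl, hle⟩ := (h N).1
      exact ⟨l, (hK.id_le N).trans_lt hl, hle⟩

lemma gaugeHaus_resSet_eq_top {α : ℝ} (hα : Irrational α) {δ : ℝ≥0∞} (hδ : 0 < δ) {s : ℝ}
    (hs : s ≤ 1) : gaugeHaus (omegaS s) (resSet α δ) = ⊤ := by
  obtain ⟨d, hd, hd0, hmem⟩ := exists_seq_mem_resSet α hδ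
  refine ENNReal.eq_top_of_forall_nnreal_le fun H => ?_
  obtain ⟨ε, hε0, -, hε⟩ := exists_resonant_not_mem_cover hα hd hd0 H
  refine le_iSup₂_of_le (min ε (Real.exp (-1))) (lt_min hε0 (Real.exp_pos _)) ?_
  refine le_iInf₂ fun a b => le_iInf₂ fun hcov hab => ?_
  by_contra! hlt
  obtain ⟨x, hx, hxab, hpos, K, hK, h⟩ := hε a b (fun j => (hab j).2.trans (min_le_left _ _)) (by
    rw [ENNReal.ofReal_coe_nnreal]
    refine (ENNReal.tsum_le_tsum fun j => ENNReal.ofReal_le_ofReal ?_).trans hlt.le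
    exact omegaS_one_le hs ((hab j).2.trans (min_le_right _ _)))
  obtain ⟨j, hj⟩ := Set.mem_iUnion.1 (hcov (hmem x hx hpos K hK h))
  exact hxab j hj

/-- A set has vanishing `ω`-Hausdorff measure if it has arbitrarily fine covers of arbitrarily small
mass, indexed by any countable type. -/
lemma gaugeHaus_eq_zero {ω : ℝ → ℝ} (hω : ω 0 = 0) {S : Set ℝ}
    (h : ∀ ε : ℝ, 0 < ε → ∀ η : ℝ≥0∞, η ≠ 0 → ∃ (ι : Type) (_ : Countable ι) (p r : ι → ℝ),
      (∀ x ∈ S, ∃ i, |x - p i| < r i / 2) ∧ (∀ i, 0 ≤ r i ∧ r i ≤ ε) ∧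
      ∑' i, ENNReal.ofReal (ω (r i)) ≤ η) : gaugeHaus ω S = 0 := by
  refine le_antisymm (iSup₂_le fun ε hε => ?_) zero_le
  refine ENNReal.le_of_forall_pos_le_add fun η hη _ => ?_
  rw [zero_add]
  obtain ⟨ι, hι, p, r, hS, hr, hsum⟩ := h ε hε η (by exact_mod_cast hη.ne')
  obtain ⟨e, he⟩ := exists_injective_nat ι
  set P : ℕ → ℝ := Function.extend e p 0 with hP
  set R : ℕ → ℝ := Function.extend e r 0 with hR
  have hRmem : ∀ n, 0 ≤ R n ∧ R n ≤ ε := fun n => by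
    by_cases hn : ∃ i, e i = n
    · obtain ⟨i, rfl⟩ := hn
      rw [hR, he.extend_apply]
      exact hr i
    · rw [hR, Function.extend_apply' _ _ _ hn]
      exact ⟨le_rfl, hε.le⟩
  have hlen : ∀ n, P n + R n / 2 - (P n - R n / 2) = R n := fun n => by ring
  refine (iInf₂_le (fun n => P n - R n / 2) (fun n => P n + R n / 2)).trans
    ((iInf₂_le ?_ fun n => ?_).trans ?_)
  · intro x hx
    obtain ⟨i, hi⟩ := hS x hx
    refine Set.mem_iUnion.2 ⟨e i, ?_⟩
    simp only [hP, hR, he.extend_apply]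
    rw [abs_lt] at hi
    exact ⟨by linarith, by linarith⟩
  · rw [hlen]
    exact ⟨by linarith [(hRmem n).1], (hRmem n).2⟩
  · simp only [hlen]
    refine le_trans (le_of_eq ?_) hsum
    rw [← he.tsum_eq (f := fun n => ENNReal.ofReal (ω (R n)))]
    · simp only [hR, he.extend_apply]
    · intro n hn
      by_contra hne
      refine hn ?_
      simp only [hR]
      rw [Function.extend_apply' _ _ _ fun ⟨i, hi⟩ => hne ⟨i, hi⟩, Pi.zero_apply, hω,
        ENNReal.ofReal_zero]

lemma omegaS_exp_neg (s t : ℝ) : omegaS s (Real.exp (-t)) = t ^ (-s) := by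
  rw [omegaS_of_pos s (Real.exp_pos _), Real.log_exp, neg_neg]

lemma exists_omegaS_le {s ε η : ℝ} (hs : 0 < s) (hε : 0 < ε) (hη : 0 < η) :
    ∃ r, 0 < r ∧ r ≤ ε ∧ omegaS s r ≤ η := by
  obtain ⟨t, h1, h2⟩ := ((Real.tendsto_exp_neg_atTop_nhds_zero.eventually_le_const hε).and
    ((tendsto_rpow_neg_atTop hs).eventually_le_const hη)).exists
  exact ⟨Real.exp (-t), Real.exp_pos _, h1, (omegaS_exp_neg s t).trans_le h2⟩

lemma exists_tsum_omegaS_le (ι : Type) [Countable ι] {s ε : ℝ} (hs : 0 < s) (hε : 0 < ε) {η : ℝ≥0∞}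
    (hη : η ≠ 0) :
    ∃ r : ι → ℝ, (∀ i, 0 < r i ∧ r i ≤ ε) ∧ ∑' i, ENNReal.ofReal (omegaS s (r i)) ≤ η := by
  obtain ⟨η', hpos, hsum⟩ := ENNReal.exists_pos_sum_of_countable hη ι
  choose r h0 h1 h2 using fun i => exists_omegaS_le hs hε (NNReal.coe_pos.2 (hpos i))
  refine ⟨r, fun i => ⟨h0 i, h1 i⟩, le_trans (ENNReal.tsum_le_tsum fun i => ?_) hsum.le⟩
  rw [← ENNReal.ofReal_coe_nnreal]
  exact ENNReal.ofReal_le_ofReal (h2 i)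

/-- The convergent part of the Borel–Cantelli argument: the intervals of length `exp (-c|k|/2)` have
small total `ω_s`-mass once finitely many `k` are removed. -/
lemma exists_finset_tsum_omegaS_le {c s ε : ℝ} (hc : 0 < c) (hs : 1 < s) (hε : 0 < ε) {η : ℝ≥0∞}
    (hη : η ≠ 0) :
    ∃ F : Finset ℤ, (∀ k ∉ F, Real.exp (-(c * |(k : ℝ)| / 2)) ≤ ε ∧
      Real.exp (-(c * |(k : ℝ)|)) < Real.exp (-(c * |(k : ℝ)| / 2)) / 2 ∧ k ≠ 0) ∧
      ∑' i : {k : ℤ // k ∉ F} × Fin 3,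
        ENNReal.ofReal (omegaS s (Real.exp (-(c * |(i.1 : ℝ)| / 2)))) ≤ η := by
  have habs : Tendsto (fun k : ℤ => c * |(k : ℝ)| / 2) cofinite atTop := by
    have h1 : Tendsto (fun k : ℤ => (k.natAbs : ℝ)) cofinite atTop :=
      tendsto_natCast_atTop_atTop.comp tendsto_natAbs_cofinite
    refine ((h1.const_mul_atTop hc).atTop_div_const two_pos).congr fun k => ?_
    rw [Nat.cast_natAbs, Int.cast_abs]
  have hexp := Real.tendsto_exp_neg_atTop_nhds_zero.comp habs
  have hev := (hexp.eventually_le_const hε).and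
    ((hexp.eventually_lt_const (show (0 : ℝ) < 1 / 2 by norm_num)).and
      (habs.eventually_gt_atTop 0))
  rw [eventually_cofinite] at hev
  have hsum : Summable fun k : ℤ => 3 * (c * |(k : ℝ)| / 2) ^ (-s) := by
    refine ((Real.summable_abs_int_rpow hs).mul_left (3 * (c / 2) ^ (-s))).congr fun k => ?_
    rw [show c * |(k : ℝ)| / 2 = c / 2 * |(k : ℝ)| by ring,
      Real.mul_rpow (by positivity) (abs_nonneg _)]
    ring
  have hlim := ENNReal.tendsto_tsum_compl_atTop_zero hsum.tsum_ofReal_ne_top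
  obtain ⟨F, hFη, hF⟩ := ((hlim.eventually_le_const (pos_iff_ne_zero.2 hη)).and
    (eventually_ge_atTop hev.toFinset)).exists
  refine ⟨F, fun k hk => ?_, ?_⟩
  · have h : k ∉ hev.toFinset := fun h => hk (hF h)
    simp only [Set.Finite.mem_toFinset, Set.mem_ofPred_eq, not_not, Function.comp_apply] at h
    obtain ⟨h1, h2, h3⟩ := h
    refine ⟨h1, ?_, ?_⟩
    · rw [show -(c * |(k : ℝ)|) = -(c * |(k : ℝ)| / 2) + -(c * |(k : ℝ)| / 2) by ring, Real.exp_add]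
      nlinarith [Real.exp_pos (-(c * |(k : ℝ)| / 2))]
    · rintro rfl
      simp at h3
  · rw [ENNReal.tsum_prod (f := fun (k : {k : ℤ // k ∉ F}) (_ : Fin 3) =>
      ENNReal.ofReal (omegaS s (Real.exp (-(c * |(k : ℝ)| / 2)))))]
    refine le_trans (ENNReal.tsum_le_tsum fun k => ?_) hFη
    rw [tsum_fintype, Finset.sum_const, Finset.card_univ, Fintype.card_fin, omegaS_exp_neg,
      ENNReal.ofReal_mul (by norm_num), ENNReal.ofReal_ofNat, nsmul_eq_mul]
    norm_cast

/-- A point of `[0,1]` close to `kα` modulo `1` is close to one of three translates of `kα`. -/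
lemma exists_fin_abs_sub_eq_distZ {x : ℝ} (hx : x ∈ Set.Icc (0 : ℝ) 1) (y : ℝ) :
    ∃ i : Fin 3, |x - (y + (⌊-y⌋ + (i : ℕ)))| = distZ (x - y) := by
  have h1 : ⌊-y⌋ ≤ round (x - y) := by
    rw [round_eq]
    refine Int.floor_le_floor ?_
    linarith [hx.1]
  have h2 : round (x - y) < ⌊-y⌋ + 3 := by
    rw [round_eq, Int.floor_lt]
    push_cast
    linarith [hx.2, Int.lt_floor_add_one (-y)]
  refine ⟨⟨(round (x - y) - ⌊-y⌋).toNat, by omega⟩, ?_⟩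
  have h3 : (((round (x - y) - ⌊-y⌋).toNat : ℕ) : ℝ) = round (x - y) - ⌊-y⌋ := by
    rw [← Int.cast_natCast, Int.toNat_of_nonneg (by omega), Int.cast_sub]
  simp only [h3, distZ]
  congr 1
  ring

/-- A non-orbit point of positive resonance strength is exponentially close to the orbit infinitely
often. -/
lemma exists_notMem_distZ_lt {α x c : ℝ} (hc : 0 < c)
    (hx : ¬ ∃ k m : ℤ, x = (k : ℝ) * α + (m : ℝ)) (h : ENNReal.ofReal c < resStrength α x)
    (F : Finset ℤ) (hF : ∀ k ∉ F, k ≠ 0) :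
    ∃ k ∉ F, distZ (x - k * α) < Real.exp (-(c * |(k : ℝ)|)) := by
  rw [resStrength, if_neg hx] at h
  obtain ⟨k, hk, hkF⟩ := ((frequently_lt_of_lt_limsup (by isBoundedDefault) h).and_eventually
    F.finite_toSet.compl_mem_cofinite).exists
  have hkF : k ∉ F := hkF
  have hk0 : 0 < |(k : ℝ)| := abs_pos.2 (Int.cast_ne_zero.2 (hF k hkF))
  refine ⟨k, hkF, ?_⟩
  have h1 := lt_of_not_ge fun h => (ENNReal.ofReal_le_ofReal h).not_gt hk
  rw [lt_div_iff₀ hk0] at h1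
  have hpos : 0 < distZ (x - k * α) := by
    refine (distZ_nonneg _).lt_of_ne fun h0 => ?_
    rw [← h0, Real.log_zero] at h1
    nlinarith
  rw [← Real.log_lt_iff_lt_exp hpos]
  linarith

lemma gaugeHaus_resSet_eq_zero (α : ℝ) {δ : ℝ≥0∞} (hδ : 0 < δ) {s : ℝ} (hs : 1 < s) :
    gaugeHaus (omegaS s) (resSet α δ) = 0 := by
  refine gaugeHaus_eq_zero (omegaS_of_nonpos s le_rfl) fun ε hε η hη => ?_
  obtain ⟨c, hc, hcδ⟩ := ENNReal.lt_iff_exists_nnreal_btwn.1 hδ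
  have hc : (0 : ℝ) < c := by exact_mod_cast hc
  have hη2 : η / 2 ≠ 0 := (ENNReal.half_pos hη).ne'
  obtain ⟨r, hr, hrsum⟩ := exists_tsum_omegaS_le (ℤ × ℤ) (one_pos.trans hs) hε hη2
  obtain ⟨F, hF, hFsum⟩ := exists_finset_tsum_omegaS_le hc hs hε hη2
  refine ⟨(ℤ × ℤ) ⊕ ({k : ℤ // k ∉ F} × Fin 3), inferInstance,
    Sum.elim (fun i => i.1 * α + i.2) fun i => i.1 * α + (⌊-(i.1 * α)⌋ + (i.2 : ℕ)),
    Sum.elim r fun i => Real.exp (-(c * |(i.1 : ℝ)| / 2)), ?_, ?_, ?_⟩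
  · rintro x ⟨hx, hxδ⟩
    by_cases horb : ∃ k m : ℤ, x = (k : ℝ) * α + (m : ℝ)
    · obtain ⟨k, m, rfl⟩ := horb
      refine ⟨Sum.inl (k, m), ?_⟩
      simp only [Sum.elim_inl, sub_self, abs_zero]
      exact half_pos (hr _).1
    · obtain ⟨k, hk, hlt⟩ := exists_notMem_distZ_lt hc horb
        (by rwa [hxδ, ENNReal.ofReal_coe_nnreal]) F fun k hk => (hF k hk).2.2
      obtain ⟨i, hi⟩ := exists_fin_abs_sub_eq_distZ hx (k * α)
      refine ⟨Sum.inr (⟨k, hk⟩, i), ?_⟩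
      simp only [Sum.elim_inr]
      rw [hi]
      exact hlt.trans (hF k hk).2.1
  · rintro (i | i)
    · exact ⟨(hr i).1.le, (hr i).2⟩
    · exact ⟨(Real.exp_pos _).le, (hF i.1 i.1.2).1⟩
  · rw [Summable.tsum_sum ENNReal.summable ENNReal.summable]
    exact (add_le_add hrsum hFsum).trans_eq (ENNReal.add_halves η)


/-- Zero–infinity dichotomy: for irrational `α ∈ [0,1]` and `0 < δ ≤ ∞`,
`ℋ^{ω_s}(D(δ)) = 0` for every `s > 1` and `ℋ^{ω_s}(D(δ)) = ∞` for every `0 < s ≤ 1`. -/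
theorem hausdorff_omegaS_resSet_dichotomy (α : ℝ) (hα : Irrational α)
    (hα01 : α ∈ Set.Icc (0 : ℝ) 1) (δ : ℝ≥0∞) (hδ : 0 < δ) :
    (∀ s : ℝ, 1 < s → gaugeHaus (omegaS s) (resSet α δ) = 0) ∧
    (∀ s : ℝ, 0 < s → s ≤ 1 → gaugeHaus (omegaS s) (resSet α δ) = ⊤) := by
  exact ⟨fun s hs => gaugeHaus_resSet_eq_zero α hδ hs,
    fun s _ hs => gaugeHaus_resSet_eq_top hα hδ hs⟩
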